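/- arXiv:1601.02717 — 8 statements merged into one kernel-verified Lean document; each statement's English description precedes it below -/
import Mathlib

section
/- Let u ∈ L²(Ω̄) and let ε satisfy 0 ≤ ε < 1. If |∫_{Ω_I} u(x) dx| ≤ ε·|Ω_I|^{1/2}·‖u‖_{L²(Ω_I)}, then |Ω̄|^{-1/2}·|∫_{Ω̄} u(x) dx| ≤ (√(1−ϱ) + √ϱ·ε)·‖u‖_{L²(Ω̄)}, where ϱ = |Ω_I|/|Ω̄|. -/
open MeasureTheory

/-- The `L²` norm of `u` over the set `D`. -/
noncomputable def l2norm {n : ℕ} (D : Set (EuclideanSpace ℝ (Fin n)))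
    (u : EuclideanSpace ℝ (Fin n) → ℝ) : ℝ :=
  Real.sqrt (∫ x in D, u x ^ 2)

theorem cs_aux {n : ℕ} (D : Set (EuclideanSpace ℝ (Fin n)))
    (hfin : volume D ≠ ⊤) (hpos : 0 < volume D)
    (u : EuclideanSpace ℝ (Fin n) → ℝ) (hu : MemLp u 2 (volume.restrict D)) :
    |∫ x in D, u x| ≤ Real.sqrt (volume D).toReal * l2norm D u := by
  have hF : IsFiniteMeasure (volume.restrict D) := ⟨by simpa using hfin.lt_top⟩
  have hm : 0 < (volume D).toReal := ENNReal.toReal_pos hpos.ne' hfin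
  have hi : Integrable u (volume.restrict D) := hu.integrable (by norm_num)
  have hs : Integrable (fun x => u x ^ 2) (volume.restrict D) := hu.integrable_sq
  unfold l2norm
  rw [← Real.sqrt_mul hm.le]
  apply Real.abs_le_sqrt
  set m := (volume D).toReal with hmdef
  set I := ∫ x in D, u x with hI
  set S := ∫ x in D, u x ^ 2 with hS
  have h0 : 0 ≤ ∫ x in D, (m * u x - I) ^ 2 := integral_nonneg fun x => sq_nonneg _
  have h1 : ∫ x in D, (m * u x - I) ^ 2 = m ^ 2 * S - 2 * m * I * I + I ^ 2 * m := by
    have : ∀ x, (m * u x - I) ^ 2 = (m ^ 2 * u x ^ 2 - 2 * m * I * u x) + I ^ 2 := by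
      intro x; ring
    simp_rw [this]
    have hd : Integrable (fun x => m ^ 2 * u x ^ 2 - 2 * m * I * u x) (volume.restrict D) :=
      (hs.const_mul _).sub (hi.const_mul _)
    rw [integral_add hd (integrable_const _),
      integral_sub (hs.const_mul _) (hi.const_mul _), integral_const_mul, integral_const_mul,
      integral_const]
    simp only [Measure.real, Measure.restrict_apply_univ, smul_eq_mul]
    rw [← hmdef]; ring
  rw [h1] at h0
  have h2 : 0 ≤ m * (m * S - I ^ 2) := by nlinarith
  have := nonneg_of_mul_nonneg_right h2 hm
  linarith

theorem stmt0 {n : ℕ} (Ω ΩI : Set (EuclideanSpace ℝ (Fin n)))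
    (hΩmeas : MeasurableSet Ω) (hΩImeas : MeasurableSet ΩI)
    (hdisj : Disjoint Ω ΩI)
    (hΩbdd : Bornology.IsBounded Ω) (hΩIbdd : Bornology.IsBounded ΩI)
    (hΩpos : 0 < volume Ω) (hΩIpos : 0 < volume ΩI)
    (u : EuclideanSpace ℝ (Fin n) → ℝ)
    (hu : MemLp u 2 (volume.restrict (Ω ∪ ΩI)))
    (ε : ℝ) (hε0 : 0 ≤ ε) (hε1 : ε < 1)
    (hbound : |∫ x in ΩI, u x| ≤ ε * Real.sqrt (volume ΩI).toReal * l2norm ΩI u) :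
    (Real.sqrt (volume (Ω ∪ ΩI)).toReal)⁻¹ * |∫ x in Ω ∪ ΩI, u x| ≤
      (Real.sqrt (1 - (volume ΩI).toReal / (volume (Ω ∪ ΩI)).toReal) +
        Real.sqrt ((volume ΩI).toReal / (volume (Ω ∪ ΩI)).toReal) * ε) *
        l2norm (Ω ∪ ΩI) u := by
  have hf1 : volume Ω ≠ ⊤ := hΩbdd.measure_lt_top.ne
  have hf2 : volume ΩI ≠ ⊤ := hΩIbdd.measure_lt_top.ne
  have huΩ : MemLp u 2 (volume.restrict Ω) :=
    hu.mono_measure (Measure.restrict_mono Set.subset_union_left le_rfl)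
  have huI : MemLp u 2 (volume.restrict ΩI) :=
    hu.mono_measure (Measure.restrict_mono Set.subset_union_right le_rfl)
  have hF : IsFiniteMeasure (volume.restrict Ω) := ⟨by simpa using hf1.lt_top⟩
  have hF' : IsFiniteMeasure (volume.restrict ΩI) := ⟨by simpa using hf2.lt_top⟩
  have hcs := cs_aux Ω hf1 hΩpos u huΩ
  have hV : (volume (Ω ∪ ΩI)).toReal = (volume Ω).toReal + (volume ΩI).toReal := by
    rw [measure_union hdisj hΩImeas, ENNReal.toReal_add hf1 hf2]
  have hint : ∫ x in Ω ∪ ΩI, u x = (∫ x in Ω, u x) + ∫ x in ΩI, u x :=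
    setIntegral_union hdisj hΩImeas (huΩ.integrable (by norm_num)) (huI.integrable (by norm_num))
  have hsq : ∫ x in Ω ∪ ΩI, u x ^ 2 = (∫ x in Ω, u x ^ 2) + ∫ x in ΩI, u x ^ 2 :=
    setIntegral_union hdisj hΩImeas huΩ.integrable_sq huI.integrable_sq
  have hp1 : 0 ≤ ∫ x in Ω, u x ^ 2 := integral_nonneg fun x => sq_nonneg _
  have hp2 : 0 ≤ ∫ x in ΩI, u x ^ 2 := integral_nonneg fun x => sq_nonneg _
  have ha : l2norm Ω u ≤ l2norm (Ω ∪ ΩI) u := Real.sqrt_le_sqrt (by linarith)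
  have hb : l2norm ΩI u ≤ l2norm (Ω ∪ ΩI) u := Real.sqrt_le_sqrt (by linarith)
  have hm : 0 < (volume Ω).toReal := ENNReal.toReal_pos hΩpos.ne' hf1
  have hk : 0 < (volume ΩI).toReal := ENNReal.toReal_pos hΩIpos.ne' hf2
  rw [hint, hV]
  set m := (volume Ω).toReal
  set k := (volume ΩI).toReal
  have h1 : 1 - k / (m + k) = m / (m + k) := by field_simp; ring
  rw [h1, Real.sqrt_div hm.le, Real.sqrt_div hk.le]
  have hs : 0 < Real.sqrt (m + k) := Real.sqrt_pos.2 (by linarith)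
  calc _ ≤ (Real.sqrt (m + k))⁻¹ *
        (Real.sqrt m * l2norm (Ω ∪ ΩI) u + ε * Real.sqrt k * l2norm (Ω ∪ ΩI) u) := by
        gcongr
        refine (abs_add_le _ _).trans (add_le_add (hcs.trans ?_) (hbound.trans ?_)) <;> gcongr
    _ = _ := by ring
end

section
/- Let u ∈ L²(Ω̄), let 0 < t ≤ 1, and set ϱ = |Ω_I|/|Ω̄|. If 0 ≤ ε ≤ (1−t)√ϱ / (1 + √(1−ϱ)) and |∫_{Ω_I} u(x) dx| ≤ ε·|Ω_I|^{1/2}·‖u‖_{L²(Ω_I)}, then |Ω̄|^{-1/2}·|∫_{Ω̄} u(x) dx| ≤ (1 − tϱ/(1 + √(1−ϱ)))·‖u‖_{L²(Ω̄)}. -/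
open MeasureTheory

theorem cs_aux_s1 {α : Type*} [MeasurableSpace α] (μ : Measure α) [IsFiniteMeasure μ]
    (u : α → ℝ) (hu : MemLp u 2 μ) (hV : 0 < μ.real Set.univ) :
    |∫ x, u x ∂μ| ≤ Real.sqrt (μ.real Set.univ) * Real.sqrt (∫ x, u x ^ 2 ∂μ) := by
  have h1 : Integrable u μ := hu.integrable (by norm_num)
  have h2 : Integrable (fun x => u x ^ 2) μ := hu.integrable_sq
  set V := μ.real Set.univ with hVdef
  set I := ∫ x, u x ∂μ with hI
  set Q := ∫ x, u x ^ 2 ∂μ with hQ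
  have key : ∫ x, (V ^ 2 * u x ^ 2 - 2 * V * I * u x + I ^ 2) ∂μ
      = V ^ 2 * Q - 2 * V * I * I + V * I ^ 2 := by
    have h5 : Integrable (fun x => V ^ 2 * u x ^ 2 - 2 * V * I * u x) μ :=
      (h2.const_mul _).sub (h1.const_mul _)
    rw [integral_add h5 (integrable_const _), integral_sub (h2.const_mul _) (h1.const_mul _), integral_const_mul, integral_const_mul,
      integral_const, smul_eq_mul]
  have hnn : 0 ≤ ∫ x, (V ^ 2 * u x ^ 2 - 2 * V * I * u x + I ^ 2) ∂μ :=
    integral_nonneg fun x => by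
      have := sq_nonneg (V * u x - I)
      simp only [Pi.zero_apply]
      nlinarith
  rw [key] at hnn
  have h3 : 0 ≤ V * (V * Q - I ^ 2) := by nlinarith
  have h4 : 0 ≤ V * Q - I ^ 2 := nonneg_of_mul_nonneg_right h3 hV
  rw [← Real.sqrt_mul hV.le]
  exact Real.abs_le_sqrt (by linarith)

theorem stmt1 {n : ℕ} (Ω ΩI : Set (EuclideanSpace ℝ (Fin n)))
    (hΩmeas : MeasurableSet Ω) (hΩImeas : MeasurableSet ΩI)
    (hdisj : Disjoint Ω ΩI)
    (hΩbdd : Bornology.IsBounded Ω) (hΩIbdd : Bornology.IsBounded ΩI)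
    (hΩpos : 0 < volume Ω) (hΩIpos : 0 < volume ΩI)
    (u : EuclideanSpace ℝ (Fin n) → ℝ)
    (hu : MemLp u 2 (volume.restrict (Ω ∪ ΩI)))
    (t : ℝ) (ht0 : 0 < t) (ht1 : t ≤ 1)
    (ϱ : ℝ) (hϱ : ϱ = (volume ΩI).toReal / (volume (Ω ∪ ΩI)).toReal)
    (ε : ℝ) (hε0 : 0 ≤ ε)
    (hε : ε ≤ (1 - t) * Real.sqrt ϱ / (1 + Real.sqrt (1 - ϱ)))
    (hbound : |∫ x in ΩI, u x| ≤ ε * Real.sqrt (volume ΩI).toReal * l2norm ΩI u) :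
    (Real.sqrt (volume (Ω ∪ ΩI)).toReal)⁻¹ * |∫ x in Ω ∪ ΩI, u x| ≤
      (1 - t * ϱ / (1 + Real.sqrt (1 - ϱ))) * l2norm (Ω ∪ ΩI) u := by
  have fΩ : volume Ω ≠ ⊤ := hΩbdd.measure_lt_top.ne
  have fI : volume ΩI ≠ ⊤ := hΩIbdd.measure_lt_top.ne
  have hA : 0 < (volume Ω).toReal := ENNReal.toReal_pos hΩpos.ne' fΩ
  have hB : 0 < (volume ΩI).toReal := ENNReal.toReal_pos hΩIpos.ne' fI
  have hsum : (volume (Ω ∪ ΩI)).toReal = (volume Ω).toReal + (volume ΩI).toReal := by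
    rw [measure_union hdisj hΩImeas, ENNReal.toReal_add fΩ fI]
  have huΩ : MemLp u 2 (volume.restrict Ω) :=
    hu.mono_measure (Measure.restrict_mono Set.subset_union_left le_rfl)
  have huI : MemLp u 2 (volume.restrict ΩI) :=
    hu.mono_measure (Measure.restrict_mono Set.subset_union_right le_rfl)
  have : IsFiniteMeasure (volume.restrict Ω) := ⟨by simpa using fΩ.lt_top⟩
  have : IsFiniteMeasure (volume.restrict ΩI) := ⟨by simpa using fI.lt_top⟩
  have hr : (volume.restrict Ω).real Set.univ = (volume Ω).toReal := by
    simp [Measure.real]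
  have hcs := cs_aux_s1 (volume.restrict Ω) u huΩ (by rw [hr]; exact hA)
  rw [hr] at hcs
  have hint : ∫ x in Ω ∪ ΩI, u x = (∫ x in Ω, u x) + ∫ x in ΩI, u x :=
    setIntegral_union hdisj hΩImeas (huΩ.integrable (by norm_num)) (huI.integrable (by norm_num))
  have hint2 : ∫ x in Ω ∪ ΩI, u x ^ 2 = (∫ x in Ω, u x ^ 2) + ∫ x in ΩI, u x ^ 2 :=
    setIntegral_union hdisj hΩImeas huΩ.integrable_sq huI.integrable_sq
  have q1 : 0 ≤ ∫ x in Ω, u x ^ 2 := integral_nonneg fun x => sq_nonneg _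
  have q2 : 0 ≤ ∫ x in ΩI, u x ^ 2 := integral_nonneg fun x => sq_nonneg _
  have hac : Real.sqrt (∫ x in Ω, u x ^ 2) ≤ l2norm (Ω ∪ ΩI) u :=
    Real.sqrt_le_sqrt (by rw [hint2]; linarith)
  have hbc : l2norm ΩI u ≤ l2norm (Ω ∪ ΩI) u :=
    Real.sqrt_le_sqrt (by rw [hint2]; linarith)
  have hb0 : 0 ≤ l2norm ΩI u := Real.sqrt_nonneg _
  rw [hint]
  rw [hsum] at hϱ ⊢
  generalize l2norm (Ω ∪ ΩI) u = c at *
  generalize l2norm ΩI u = b at *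
  have ha0 := Real.sqrt_nonneg (∫ x in Ω, u x ^ 2)
  generalize Real.sqrt (∫ x in Ω, u x ^ 2) = a at *
  generalize (∫ x in Ω, u x) = I1 at *
  generalize (∫ x in ΩI, u x) = I2 at *
  generalize (volume Ω).toReal = A at *
  generalize (volume ΩI).toReal = B at *
  have hAB : 0 < A + B := by linarith
  have h1ϱ : 1 - ϱ = A / (A + B) := by rw [hϱ]; field_simp; ring
  have hϱ0 : 0 ≤ ϱ := by rw [hϱ]; positivity
  have hs : Real.sqrt A = Real.sqrt (1 - ϱ) * Real.sqrt (A + B) := by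
    rw [← Real.sqrt_mul (by rw [h1ϱ]; positivity), h1ϱ]; congr 1; field_simp
  have hr' : Real.sqrt B = Real.sqrt ϱ * Real.sqrt (A + B) := by
    rw [← Real.sqrt_mul hϱ0, hϱ]; congr 1; field_simp
  have hss : Real.sqrt (1 - ϱ) ^ 2 = 1 - ϱ := Real.sq_sqrt (by rw [h1ϱ]; positivity)
  have hrr : Real.sqrt ϱ ^ 2 = ϱ := Real.sq_sqrt hϱ0
  have hs0 := Real.sqrt_nonneg (1 - ϱ)
  have hr0 := Real.sqrt_nonneg ϱ
  have hM : 0 < Real.sqrt (A + B) := Real.sqrt_pos.2 hAB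
  rw [hs] at hcs
  rw [hr'] at hbound
  generalize Real.sqrt (1 - ϱ) = s at *
  generalize Real.sqrt ϱ = r at *
  generalize Real.sqrt (A + B) = M at *
  have hd : 0 < 1 + s := by linarith
  have e1 : t * ϱ / (1 + s) = t * (1 - s) := by
    rw [div_eq_iff hd.ne']; linear_combination t * hss
  have e2 : ε * r ≤ (1 - t) * (1 - s) := by
    calc ε * r ≤ (1 - t) * r / (1 + s) * r := mul_le_mul_of_nonneg_right hε hr0
      _ = (1 - t) * (1 - s) := by
        rw [div_mul_eq_mul_div, div_eq_iff hd.ne']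
        linear_combination (1 - t) * hrr + (1 - t) * hss
  rw [e1, inv_mul_le_iff₀ hM]
  have e3 : s * a ≤ s * c := mul_le_mul_of_nonneg_left hac hs0
  have e4 : ε * r * b ≤ (1 - t) * (1 - s) * c :=
    mul_le_mul e2 hbc hb0 ((mul_nonneg hε0 hr0).trans e2)
  calc |I1 + I2| ≤ |I1| + |I2| := abs_add_le _ _
    _ ≤ s * M * a + ε * (r * M) * b := add_le_add hcs hbound
    _ = M * (s * a + ε * r * b) := by ring
    _ ≤ M * (s * c + (1 - t) * (1 - s) * c) := by gcongr
    _ = M * ((1 - t * (1 - s)) * c) := by ring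
end

section
/- Let u ∈ L²(Ω̄), let 0 < t ≤ 1, and set ϱ = |Ω_I|/|Ω̄|. If |∫_{Ω_I} u(x) dx| ≤ ε·|Ω_I|^{1/2}·‖u‖_{L²(Ω_I)} with 0 ≤ ε ≤ (1−t)√ϱ / (1 + √(1−ϱ)), then ‖u − |Ω̄|^{-1}∫_{Ω̄} u(x) dx‖²_{L²(Ω̄)} ≥ (tϱ/(1 + √(1−ϱ)))·‖u‖²_{L²(Ω̄)}, where the subtracted quantity is the constant function on Ω̄ equal to the mean of u. -/
open MeasureTheory

lemma var_id {n : ℕ} (D : Set (EuclideanSpace ℝ (Fin n)))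
    (u : EuclideanSpace ℝ (Fin n) → ℝ) (hD : volume D ≠ ⊤) (m : ℝ)
    (hm : (volume D).toReal = m) (hm0 : 0 < m)
    (hu : MemLp u 2 (volume.restrict D)) :
    (∫ x in D, (u x - m⁻¹ * ∫ y in D, u y) ^ 2)
      = (∫ x in D, u x ^ 2) - m⁻¹ * (∫ x in D, u x) ^ 2 := by
  have : IsFiniteMeasure (volume.restrict D) :=
    ⟨by rw [Measure.restrict_apply_univ]; exact lt_top_iff_ne_top.2 hD⟩
  have h1 : Integrable u (volume.restrict D) := hu.integrable (by norm_num)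
  have h2 : Integrable (fun x => u x ^ 2) (volume.restrict D) := hu.integrable_sq
  generalize hI : (∫ y in D, u y) = I
  have e : ∀ x, (u x - m⁻¹ * I) ^ 2 = (u x ^ 2 - (2 * (m⁻¹ * I)) * u x) + (m⁻¹ * I) ^ 2 := by
    intro x; ring
  simp_rw [e]
  have h3 : Integrable (fun x => u x ^ 2 - (2 * (m⁻¹ * I)) * u x) (volume.restrict D) :=
    h2.sub (h1.const_mul _)
  rw [integral_add h3 (integrable_const _),
    integral_sub h2 (h1.const_mul _), integral_const_mul, hI, integral_const]
  simp only [Measure.real, Measure.restrict_apply_univ, hm, smul_eq_mul]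
  field_simp
  ring

lemma core (A B P Q M p q t ϱ ε : ℝ) (ht0 : 0 < t) (ht1 : t ≤ 1) (hε0 : 0 ≤ ε)
    (p0 : 0 < p) (q0 : 0 < q) (hP0 : 0 ≤ P) (hQ0 : 0 ≤ Q) (hM0 : 0 < M) (hUr : M = p + q)
    (hϱ : ϱ = q / M) (hε : ε ≤ (1 - t) * √ϱ / (1 + √(1 - ϱ)))
    (hbound : |B| ≤ ε * √q * √Q) (hcs : 0 ≤ P - p⁻¹ * A ^ 2) :
    P + Q - M⁻¹ * (A + B) ^ 2 ≥ t * ϱ / (1 + √(1 - ϱ)) * (P + Q) := by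
  have hq : q = ϱ * M := by rw [hϱ]; field_simp
  have hp : p = (1 - ϱ) * M := by linarith
  have r0 : 0 < ϱ := by rw [hϱ]; positivity
  have r1 : 0 < 1 - ϱ := by
    by_contra h
    nlinarith
  have hs : √(1 - ϱ) ^ 2 = 1 - ϱ := Real.sq_sqrt r1.le
  have hs0 : 0 ≤ √(1 - ϱ) := Real.sqrt_nonneg _
  generalize √(1 - ϱ) = s at *
  have hs1 : s ≤ 1 := by nlinarith
  have hr : √ϱ ^ 2 = ϱ := Real.sq_sqrt r0.le
  have hr0 : 0 ≤ √ϱ := Real.sqrt_nonneg _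
  have hA : A ^ 2 ≤ s ^ 2 * M * P := by
    have : p⁻¹ * A ^ 2 ≤ P := by linarith
    rw [inv_mul_le_iff₀ p0] at this
    rw [hs, ← hp]; exact this
  have hB : B ^ 2 ≤ (ε * √ϱ) ^ 2 * M * Q := by
    have h := pow_le_pow_left₀ (abs_nonneg B) hbound 2
    rw [sq_abs, mul_pow, mul_pow, Real.sq_sqrt q0.le, Real.sq_sqrt hQ0] at h
    rw [mul_pow, hr]
    calc B ^ 2 ≤ _ := h
      _ = _ := by rw [hq]; ring
  have he : ε * √ϱ ≤ (1 - t) * (1 - s) := by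
    rw [le_div_iff₀ (by positivity)] at hε
    have : ε * √ϱ * (1 + s) ≤ (1 - t) * (1 - s) * (1 + s) := by
      calc ε * √ϱ * (1 + s) = ε * (1 + s) * √ϱ := by ring
        _ ≤ (1 - t) * √ϱ * √ϱ := mul_le_mul_of_nonneg_right hε hr0
        _ = (1 - t) * √ϱ ^ 2 := by ring
        _ = _ := by rw [hr, show ϱ = 1 - s ^ 2 by linarith]; ring
    exact le_of_mul_le_mul_right this (by positivity)
  have he0 : 0 ≤ ε * √ϱ := by positivity
  generalize ε * √ϱ = e at *
  have hc : t * ϱ / (1 + s) = t * (1 - s) := by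
    rw [div_eq_iff (by positivity), show ϱ = 1 - s ^ 2 by linarith]; ring
  rw [hc]
  have key : (A + B) ^ 2 ≤ (s ^ 2 + e ^ 2) * (P + Q) * M := by
    have a1 : |A| ≤ s * √(M * P) := by
      refine abs_le_of_sq_le_sq ?_ (by positivity)
      rw [mul_pow, Real.sq_sqrt (by positivity)]; linarith
    have b1 : |B| ≤ e * √(M * Q) := by
      refine abs_le_of_sq_le_sq ?_ (by positivity)
      rw [mul_pow, Real.sq_sqrt (by positivity)]; linarith
    have h1 : (A + B) ^ 2 ≤ (s * √(M * P) + e * √(M * Q)) ^ 2 := by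
      rw [← sq_abs (A + B)]
      exact pow_le_pow_left₀ (abs_nonneg _) ((abs_add_le A B).trans (add_le_add a1 b1)) 2
    have h2 := Real.sq_sqrt (show 0 ≤ M * P by positivity)
    have h3 := Real.sq_sqrt (show 0 ≤ M * Q by positivity)
    calc (A + B) ^ 2 ≤ _ := h1
      _ ≤ (s ^ 2 + e ^ 2) * (√(M * P) ^ 2 + √(M * Q) ^ 2) := by
        nlinarith [sq_nonneg (s * √(M * Q) - e * √(M * P))]
      _ = _ := by rw [h2, h3]; ring
  have hco : s ^ 2 + e ^ 2 ≤ 1 - t * (1 - s) := by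
    have hz : (1 - t) * (1 - s) ≤ 1 := by nlinarith
    have hz0 : 0 ≤ (1 - t) * (1 - s) := mul_nonneg (by linarith) (by linarith)
    have : e ^ 2 ≤ (1 - t) * (1 - s) := by nlinarith
    nlinarith
  have k2 : M⁻¹ * (A + B) ^ 2 ≤ (s ^ 2 + e ^ 2) * (P + Q) := by
    rw [inv_mul_le_iff₀ hM0]; linarith
  have k3 := mul_le_mul_of_nonneg_right hco (add_nonneg hP0 hQ0)
  linarith

theorem stmt2 {n : ℕ} (Ω ΩI : Set (EuclideanSpace ℝ (Fin n)))
    (hΩmeas : MeasurableSet Ω) (hΩImeas : MeasurableSet ΩI)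
    (hdisj : Disjoint Ω ΩI)
    (hΩbdd : Bornology.IsBounded Ω) (hΩIbdd : Bornology.IsBounded ΩI)
    (hΩpos : 0 < volume Ω) (hΩIpos : 0 < volume ΩI)
    (u : EuclideanSpace ℝ (Fin n) → ℝ)
    (hu : MemLp u 2 (volume.restrict (Ω ∪ ΩI)))
    (t : ℝ) (ht0 : 0 < t) (ht1 : t ≤ 1)
    (ϱ : ℝ) (hϱ : ϱ = (volume ΩI).toReal / (volume (Ω ∪ ΩI)).toReal)
    (ε : ℝ) (hε0 : 0 ≤ ε)
    (hε : ε ≤ (1 - t) * Real.sqrt ϱ / (1 + Real.sqrt (1 - ϱ)))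
    (hbound : |∫ x in ΩI, u x| ≤ ε * Real.sqrt (volume ΩI).toReal * l2norm ΩI u) :
    (∫ x in Ω ∪ ΩI,
        (u x - ((volume (Ω ∪ ΩI)).toReal)⁻¹ * ∫ y in Ω ∪ ΩI, u y) ^ 2) ≥
      t * ϱ / (1 + Real.sqrt (1 - ϱ)) * ∫ x in Ω ∪ ΩI, u x ^ 2 := by
  have fΩ : volume Ω ≠ ⊤ := hΩbdd.measure_lt_top.ne
  have fI : volume ΩI ≠ ⊤ := hΩIbdd.measure_lt_top.ne
  have hU : volume (Ω ∪ ΩI) = volume Ω + volume ΩI := measure_union hdisj hΩImeas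
  have fU : volume (Ω ∪ ΩI) ≠ ⊤ := by rw [hU]; exact ENNReal.add_ne_top.2 ⟨fΩ, fI⟩
  have hUr : (volume (Ω ∪ ΩI)).toReal = (volume Ω).toReal + (volume ΩI).toReal := by
    rw [hU, ENNReal.toReal_add fΩ fI]
  have p0 : 0 < (volume Ω).toReal := ENNReal.toReal_pos hΩpos.ne' fΩ
  have q0 : 0 < (volume ΩI).toReal := ENNReal.toReal_pos hΩIpos.ne' fI
  have huΩ : MemLp u 2 (volume.restrict Ω) :=
    hu.mono_measure (Measure.restrict_mono Set.subset_union_left le_rfl)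
  have huI : MemLp u 2 (volume.restrict ΩI) :=
    hu.mono_measure (Measure.restrict_mono Set.subset_union_right le_rfl)
  have : IsFiniteMeasure (volume.restrict Ω) :=
    ⟨by rw [Measure.restrict_apply_univ]; exact lt_top_iff_ne_top.2 fΩ⟩
  have : IsFiniteMeasure (volume.restrict ΩI) :=
    ⟨by rw [Measure.restrict_apply_univ]; exact lt_top_iff_ne_top.2 fI⟩
  have hsplit : (∫ x in Ω ∪ ΩI, u x) = (∫ x in Ω, u x) + ∫ x in ΩI, u x :=
    setIntegral_union hdisj hΩImeas (huΩ.integrable (by norm_num)) (huI.integrable (by norm_num))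
  have hsplit2 : (∫ x in Ω ∪ ΩI, u x ^ 2) = (∫ x in Ω, u x ^ 2) + ∫ x in ΩI, u x ^ 2 :=
    setIntegral_union hdisj hΩImeas huΩ.integrable_sq huI.integrable_sq
  have hM0 : 0 < (volume (Ω ∪ ΩI)).toReal := by rw [hUr]; positivity
  have hcs : 0 ≤ (∫ x in Ω, u x ^ 2) - (volume Ω).toReal⁻¹ * (∫ x in Ω, u x) ^ 2 := by
    rw [← var_id Ω u fΩ _ rfl p0 huΩ]
    exact integral_nonneg fun x => sq_nonneg _
  rw [var_id (Ω ∪ ΩI) u fU _ rfl hM0 hu, hsplit, hsplit2]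
  have hP0 : 0 ≤ ∫ x in Ω, u x ^ 2 := integral_nonneg fun x => sq_nonneg _
  have hQ0 : 0 ≤ ∫ x in ΩI, u x ^ 2 := integral_nonneg fun x => sq_nonneg _
  unfold l2norm at hbound
  generalize (∫ x in Ω, u x ^ 2) = P at *
  generalize (∫ x in ΩI, u x ^ 2) = Q at *
  generalize (∫ x in Ω, u x) = A at *
  generalize (∫ x in ΩI, u x) = B at *
  generalize (volume (Ω ∪ ΩI)).toReal = M at *
  generalize (volume ΩI).toReal = q at *
  generalize (volume Ω).toReal = p at *
  exact core A B P Q M p q t ϱ ε ht0 ht1 hε0 p0 q0 hP0 hQ0 hM0 hUr hϱ hε hbound hcs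
end

section
/- Let u ∈ L²(Ω̄) satisfy ∫_{Ω_I} u(x) dx = 0, and set ϱ = |Ω_I|/|Ω̄|. Then ‖u − |Ω̄|^{-1}∫_{Ω̄} u(x) dx‖²_{L²(Ω̄)} ≥ ϱ·‖u‖²_{L²(Ω̄)}, where the subtracted quantity is the constant function on Ω̄ equal to the mean of u. -/
open MeasureTheory

theorem aux_expand {α : Type*} [MeasurableSpace α] (ν : Measure α) [IsFiniteMeasure ν]
    (u : α → ℝ) (hu : MemLp u 2 ν) (c : ℝ) :
    ∫ x, (u x - c) ^ 2 ∂ν = ∫ x, u x ^ 2 ∂ν - 2 * c * ∫ x, u x ∂ν + c ^ 2 * (ν Set.univ).toReal := by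
  have h1 : Integrable u ν := hu.integrable (by norm_num)
  have h2 : Integrable (fun x => u x ^ 2) ν := hu.integrable_sq
  have h3 : Integrable (fun x => 2 * c * u x) ν := h1.const_mul _
  have e : ∀ x, (u x - c) ^ 2 = (u x ^ 2 - 2 * c * u x) + c ^ 2 := fun x => by ring
  have h4 : Integrable (fun x => u x ^ 2 - 2 * c * u x) ν := h2.sub h3
  simp_rw [e]
  rw [integral_add h4 (integrable_const _), integral_sub h2 h3, integral_const_mul,
    integral_const]
  simp [Measure.real, mul_comm]

theorem stmt3 {n : ℕ} (Ω ΩI : Set (EuclideanSpace ℝ (Fin n)))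
    (hΩmeas : MeasurableSet Ω) (hΩImeas : MeasurableSet ΩI)
    (hdisj : Disjoint Ω ΩI)
    (hΩbdd : Bornology.IsBounded Ω) (hΩIbdd : Bornology.IsBounded ΩI)
    (hΩpos : 0 < volume Ω) (hΩIpos : 0 < volume ΩI)
    (u : EuclideanSpace ℝ (Fin n) → ℝ)
    (hu : MemLp u 2 (volume.restrict (Ω ∪ ΩI)))
    (hzero : ∫ x in ΩI, u x = 0)
    (ϱ : ℝ) (hϱ : ϱ = (volume ΩI).toReal / (volume (Ω ∪ ΩI)).toReal) :
    (∫ x in Ω ∪ ΩI,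
        (u x - ((volume (Ω ∪ ΩI)).toReal)⁻¹ * ∫ y in Ω ∪ ΩI, u y) ^ 2) ≥
      ϱ * ∫ x in Ω ∪ ΩI, u x ^ 2 := by
  have fΩ : volume Ω ≠ ⊤ := hΩbdd.measure_lt_top.ne
  have fI : volume ΩI ≠ ⊤ := hΩIbdd.measure_lt_top.ne
  have fU : volume (Ω ∪ ΩI) ≠ ⊤ := (hΩbdd.union hΩIbdd).measure_lt_top.ne
  haveI : IsFiniteMeasure (volume.restrict Ω) := ⟨by simpa using fΩ.lt_top⟩
  haveI : IsFiniteMeasure (volume.restrict (Ω ∪ ΩI)) := ⟨by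
    rw [Measure.restrict_apply_univ]; exact fU.lt_top⟩
  have hV : (volume (Ω ∪ ΩI)).toReal = (volume Ω).toReal + (volume ΩI).toReal := by
    rw [measure_union hdisj hΩImeas, ENNReal.toReal_add fΩ fI]
  have huΩ : MemLp u 2 (volume.restrict Ω) :=
    hu.mono_measure (Measure.restrict_mono Set.subset_union_left le_rfl)
  have hint : IntegrableOn u (Ω ∪ ΩI) := hu.integrable (by norm_num)
  have hS : ∫ x in Ω ∪ ΩI, u x = ∫ x in Ω, u x := by
    rw [setIntegral_union hdisj hΩImeas (hint.mono_set Set.subset_union_left)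
      (hint.mono_set Set.subset_union_right), hzero, add_zero]
  have hQ : ∫ x in Ω, u x ^ 2 ≤ ∫ x in Ω ∪ ΩI, u x ^ 2 :=
    setIntegral_mono_set hu.integrable_sq (Filter.Eventually.of_forall fun x => sq_nonneg _)
      (HasSubset.Subset.eventuallyLE Set.subset_union_left)
  have ha : 0 < (volume Ω).toReal := ENNReal.toReal_pos hΩpos.ne' fΩ
  have hb : 0 < (volume ΩI).toReal := ENNReal.toReal_pos hΩIpos.ne' fI
  have hcs : 0 ≤ ∫ x in Ω, (u x - (∫ x in Ω, u x) / (volume Ω).toReal) ^ 2 :=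
    integral_nonneg fun x => sq_nonneg _
  rw [aux_expand _ u huΩ] at hcs
  rw [aux_expand _ u hu, hS, hϱ]
  simp only [Measure.restrict_apply_univ] at hcs ⊢
  rw [hV]
  generalize (volume Ω).toReal = a at *
  generalize (volume ΩI).toReal = b at *
  generalize (∫ x in Ω, u x) = S at *
  generalize (∫ x in Ω, u x ^ 2) = P at *
  generalize (∫ x in Ω ∪ ΩI, u x ^ 2) = Q at *
  have h1 : S ^ 2 ≤ a * Q := by
    have e : P - 2 * (S / a) * S + (S / a) ^ 2 * a = (a * P - S ^ 2) / a := by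
      field_simp; ring
    rw [e] at hcs
    have := mul_nonneg hcs ha.le
    rw [div_mul_cancel₀ _ ha.ne'] at this
    nlinarith
  have e : Q - 2 * ((a + b)⁻¹ * S) * S + ((a + b)⁻¹ * S) ^ 2 * (a + b) - b / (a + b) * Q
      = (a * Q - S ^ 2) / (a + b) := by
    field_simp; ring
  have : 0 ≤ (a * Q - S ^ 2) / (a + b) := div_nonneg (by linarith) (by linarith)
  linarith
end

section
/- Suppose there is a constant C₀ > 0 such that a(w,w) ≥ C₀·‖w‖²_{L²(Ω̄)} for every w ∈ L²(Ω̄) with ∫_{Ω̄} w(x) dx = 0 (a nonlocal Poincaré inequality), and set ϱ = |Ω_I|/|Ω̄|. Then every u ∈ L²(Ω̄) with ∫_{Ω_I} u(x) dx = 0 satisfies a(u,u) ≥ (ϱ/(1 + √(1−ϱ)))·C₀·‖u‖²_{L²(Ω̄)}. -/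
open MeasureTheory

/-- The nonlocal bilinear form
`a(u,v) = ∫_D ∫_D γ(x,y) (u x - u y) (v x - v y) dy dx`. -/
noncomputable def aform {n : ℕ} (D : Set (EuclideanSpace ℝ (Fin n)))
    (γ : EuclideanSpace ℝ (Fin n) → EuclideanSpace ℝ (Fin n) → ℝ)
    (u v : EuclideanSpace ℝ (Fin n) → ℝ) : ℝ :=
  ∫ x in D, ∫ y in D, γ x y * (u x - u y) * (v x - v y)

/-- Expansion of the squared deviation from a constant. -/
lemma sq_dev {α : Type*} [MeasurableSpace α] (μ : Measure α) [IsFiniteMeasure μ] (u : α → ℝ)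
    (hu : MemLp u 2 μ) (c : ℝ) :
    ∫ x, (u x - c) ^ 2 ∂μ = (∫ x, u x ^ 2 ∂μ) - 2 * c * (∫ x, u x ∂μ) + c ^ 2 * (μ Set.univ).toReal := by
  have h1 : Integrable u μ := hu.integrable (by norm_num)
  have h2 : Integrable (fun x => u x ^ 2) μ := hu.integrable_sq
  have : ∀ x, (u x - c) ^ 2 = u x ^ 2 - 2 * c * u x + c ^ 2 := fun x => by ring
  simp_rw [this]
  have h3 : Integrable (fun x => u x ^ 2 - 2 * c * u x) μ := h2.sub (h1.const_mul _)
  rw [integral_add h3 (integrable_const _),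
    integral_sub h2 (h1.const_mul _), integral_const_mul, integral_const]
  simp [Measure.real, mul_comm]

theorem stmt6 {n : ℕ} (Ω ΩI : Set (EuclideanSpace ℝ (Fin n)))
    (hΩmeas : MeasurableSet Ω) (hΩImeas : MeasurableSet ΩI)
    (hdisj : Disjoint Ω ΩI)
    (hΩbdd : Bornology.IsBounded Ω) (hΩIbdd : Bornology.IsBounded ΩI)
    (hΩpos : 0 < volume Ω) (hΩIpos : 0 < volume ΩI)
    (γ : EuclideanSpace ℝ (Fin n) → EuclideanSpace ℝ (Fin n) → ℝ)
    (hγmeas : Measurable fun p : EuclideanSpace ℝ (Fin n) × EuclideanSpace ℝ (Fin n) => γ p.1 p.2)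
    (hγnonneg : ∀ x y, 0 ≤ γ x y)
    (hγbdd : ∃ M, ∀ x y, γ x y ≤ M)
    -- the nonlocal Poincaré inequality
    (C₀ : ℝ) (hC₀ : 0 < C₀)
    (hpoincare : ∀ w : EuclideanSpace ℝ (Fin n) → ℝ,
      MemLp w 2 (volume.restrict (Ω ∪ ΩI)) → (∫ x in Ω ∪ ΩI, w x) = 0 →
      aform (Ω ∪ ΩI) γ w w ≥ C₀ * ∫ x in Ω ∪ ΩI, w x ^ 2)
    (ϱ : ℝ) (hϱ : ϱ = (volume ΩI).toReal / (volume (Ω ∪ ΩI)).toReal)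
    (u : EuclideanSpace ℝ (Fin n) → ℝ)
    (hu : MemLp u 2 (volume.restrict (Ω ∪ ΩI)))
    (hzero : ∫ x in ΩI, u x = 0) :
    aform (Ω ∪ ΩI) γ u u ≥
      ϱ / (1 + Real.sqrt (1 - ϱ)) * C₀ * ∫ x in Ω ∪ ΩI, u x ^ 2 := by
  have fA : volume Ω ≠ ⊤ := hΩbdd.measure_lt_top.ne
  have fB : volume ΩI ≠ ⊤ := hΩIbdd.measure_lt_top.ne
  have hV : (volume (Ω ∪ ΩI)).toReal = (volume Ω).toReal + (volume ΩI).toReal := by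
    rw [measure_union hdisj hΩImeas, ENNReal.toReal_add fA fB]
  have hA : 0 < (volume Ω).toReal := ENNReal.toReal_pos hΩpos.ne' fA
  have hB : 0 < (volume ΩI).toReal := ENNReal.toReal_pos hΩIpos.ne' fB
  have : IsFiniteMeasure (volume.restrict Ω) := ⟨by simpa using fA.lt_top⟩
  have : IsFiniteMeasure (volume.restrict (Ω ∪ ΩI)) :=
    ⟨by simpa using ⟨fA.lt_top, fB.lt_top⟩⟩
  have hi : IntegrableOn u (Ω ∪ ΩI) := hu.integrable (by norm_num)
  have hi2 : IntegrableOn (fun x => u x ^ 2) (Ω ∪ ΩI) := hu.integrable_sq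
  have huΩ : MemLp u 2 (volume.restrict Ω) :=
    hu.mono_measure (Measure.restrict_mono Set.subset_union_left le_rfl)
  have hS : ∫ x in Ω ∪ ΩI, u x = ∫ x in Ω, u x := by
    rw [setIntegral_union hdisj hΩImeas (hi.mono_set Set.subset_union_left)
      (hi.mono_set Set.subset_union_right), hzero, add_zero]
  have hle : ∫ x in Ω, u x ^ 2 ≤ ∫ x in Ω ∪ ΩI, u x ^ 2 :=
    setIntegral_mono_set hi2 (Filter.Eventually.of_forall fun x => sq_nonneg _)
      Set.subset_union_left.eventuallyLE
  have e1 := sq_dev (volume.restrict Ω) u huΩ ((∫ x in Ω, u x) / (volume Ω).toReal)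
  have e2 := sq_dev (volume.restrict (Ω ∪ ΩI)) u hu
    ((∫ x in Ω, u x) / (volume (Ω ∪ ΩI)).toReal)
  have n1 : 0 ≤ ∫ x in Ω, (u x - (∫ x in Ω, u x) / (volume Ω).toReal) ^ 2 :=
    integral_nonneg fun x => sq_nonneg _
  have n2 : 0 ≤ ∫ x in Ω ∪ ΩI, u x ^ 2 := integral_nonneg fun x => sq_nonneg _
  rw [Measure.restrict_apply_univ] at e1 e2
  rw [hS] at e2
  have hp := hpoincare (fun x => u x - (∫ x in Ω, u x) / (volume (Ω ∪ ΩI)).toReal)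
    (hu.sub (memLp_const _)) (by
      rw [integral_sub hi (integrable_const _), hS, integral_const]
      have : (volume (Ω ∪ ΩI)).toReal ≠ 0 := by rw [hV]; positivity
      simp only [Measure.real, Measure.restrict_apply_univ, smul_eq_mul]
      field_simp
      simp)
  have ha : aform (Ω ∪ ΩI) γ (fun x => u x - (∫ x in Ω, u x) / (volume (Ω ∪ ΩI)).toReal)
      (fun x => u x - (∫ x in Ω, u x) / (volume (Ω ∪ ΩI)).toReal)
      = aform (Ω ∪ ΩI) γ u u := by
    simp only [aform, sub_sub_sub_cancel_right]
  rw [ha, e2] at hp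
  rw [e1] at n1
  rw [hV] at hp hϱ
  clear e1 e2 ha hpoincare
  generalize (∫ x in Ω, u x) = S at *
  generalize (∫ x in Ω, u x ^ 2) = P at *
  generalize (∫ x in Ω ∪ ΩI, u x ^ 2) = U at *
  generalize (volume Ω).toReal = A at *
  generalize (volume ΩI).toReal = B at *
  have hρ : 0 ≤ ϱ := by rw [hϱ]; positivity
  have k1 : S ^ 2 ≤ A * U := by
    have : P - 2 * (S / A) * S + (S / A) ^ 2 * A = P - S ^ 2 / A := by field_simp; ring
    rw [this] at n1
    have : S ^ 2 / A ≤ U := by linarith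
    rwa [div_le_iff₀ hA, mul_comm] at this
  have k2 : ϱ * U ≤ U - 2 * (S / (A + B)) * S + (S / (A + B)) ^ 2 * (A + B) := by
    have : U - 2 * (S / (A + B)) * S + (S / (A + B)) ^ 2 * (A + B) - ϱ * U
        = (A * U - S ^ 2) / (A + B) := by rw [hϱ]; field_simp; ring
    have h3 : 0 ≤ (A * U - S ^ 2) / (A + B) := div_nonneg (by linarith) (by positivity)
    linarith
  have k3 : ϱ / (1 + Real.sqrt (1 - ϱ)) ≤ ϱ :=
    div_le_self hρ (by linarith [Real.sqrt_nonneg (1 - ϱ)])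
  calc ϱ / (1 + Real.sqrt (1 - ϱ)) * C₀ * U ≤ ϱ * C₀ * U := by gcongr
    _ = C₀ * (ϱ * U) := by ring
    _ ≤ _ := mul_le_mul_of_nonneg_left k2 hC₀.le
    _ ≤ _ := hp
end

section
/- Let U be a closed subspace of L²(Ω̄), Λ a closed subspace of L²(Ω_I), and U^c = {u ∈ U : ∫_{Ω_I} u(x)·λ(x) dx = 0 for all λ ∈ Λ}. Assume: (i) there exists c > 0 with a(z,z) ≥ c·‖z‖²_{L²(Ω̄)} for all z ∈ U^c; and (ii) there is β > 0 such that every λ ∈ Λ admits an extension λ̃ ∈ U with λ̃|_{Ω_I} = λ and β·‖λ̃‖_{L²(Ω̄)} ≤ ‖λ‖_{L²(Ω_I)}. Then for every f ∈ L²(Ω) there exist unique u ∈ U and λ ∈ Λ such that a(u,v) + ∫_{Ω_I} λ(x)·v(x) dx = ∫_Ω v(x)·f(x) dx for all v ∈ U, and ∫_{Ω_I} u(x)·ν(x) dx = 0 for all ν ∈ Λ. -/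
open MeasureTheory

theorem saddle_aux {H K : Type*} [NormedAddCommGroup H] [InnerProductSpace ℝ H] [CompleteSpace H]
    [NormedAddCommGroup K] [InnerProductSpace ℝ K] [CompleteSpace K]
    (U : Submodule ℝ H) (hU : IsClosed (U : Set H)) (L : Submodule ℝ K) (hL : IsClosed (L : Set K))
    (R : H →L[ℝ] K) (A : H →L[ℝ] H →L[ℝ] ℝ) (F : H →L[ℝ] ℝ)
    (c : ℝ) (hc : 0 < c)
    (hcoer : ∀ z ∈ U, (∀ l ∈ L, inner ℝ (R z) l = 0) → c * ‖z‖ ^ 2 ≤ A z z)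
    (β : ℝ) (hβ : 0 < β) (hext : ∀ l ∈ L, ∃ t ∈ U, R t = l ∧ β * ‖t‖ ≤ ‖l‖) :
    ∃! p : H × K, p.1 ∈ U ∧ p.2 ∈ L ∧ (∀ v ∈ U, A p.1 v + inner ℝ p.2 (R v) = F v) ∧
      ∀ ν ∈ L, inner ℝ (R p.1) ν = 0 := by
  let V : Submodule ℝ H :=
    { carrier := {u | u ∈ U ∧ ∀ l ∈ L, inner ℝ (R u) l = 0}
      add_mem' := by
        rintro a b ⟨ha, ha'⟩ ⟨hb, hb'⟩
        exact ⟨U.add_mem ha hb, fun l hl => by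
          rw [map_add, inner_add_left, ha' l hl, hb' l hl, add_zero]⟩
      zero_mem' := ⟨U.zero_mem, fun l hl => by simp⟩
      smul_mem' := by
        rintro r a ⟨ha, ha'⟩
        exact ⟨U.smul_mem r ha, fun l hl => by
          rw [map_smul, inner_smul_left, ha' l hl, mul_zero]⟩ }
  have hV : IsClosed (V : Set H) := by
    have : (V : Set H) = (U : Set H) ∩ ⋂ l ∈ L, {u | inner ℝ (R u) l = 0} := by
      ext u; simp [V]
    rw [this]
    refine hU.inter (isClosed_biInter fun l _ => isClosed_eq (by fun_prop) continuous_const)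
  have memV : ∀ u, u ∈ V ↔ u ∈ U ∧ ∀ l ∈ L, inner ℝ (R u) l = 0 := fun u => Iff.rfl
  have : CompleteSpace V := hV.completeSpace_coe
  have : CompleteSpace L := hL.completeSpace_coe
  let B : V →L[ℝ] V →L[ℝ] ℝ := A.bilinearComp V.subtypeL V.subtypeL
  have hB : IsCoercive B := ⟨c, hc, fun u => by
    have := hcoer u u.2.1 u.2.2
    simp only [B, ContinuousLinearMap.bilinearComp_apply, Submodule.subtypeL_apply]
    calc _ = c * ‖(u : H)‖ ^ 2 := by rw [Submodule.norm_coe]; ring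
      _ ≤ _ := this⟩
  obtain ⟨u, hu⟩ : ∃ u : V, ∀ v : V, A u v = F v := by
    let g : V := (InnerProductSpace.toDual ℝ V).symm (F.comp V.subtypeL)
    refine ⟨hB.continuousLinearEquivOfBilin.symm g, fun v => ?_⟩
    have h := hB.continuousLinearEquivOfBilin_apply (hB.continuousLinearEquivOfBilin.symm g) v
    rw [ContinuousLinearEquiv.apply_symm_apply] at h
    have h2 : inner ℝ g v = F v := by
      simp [g]
    rw [← h2, h]; rfl
  let G : H →L[ℝ] ℝ := F - A u
  have hG : ∀ v ∈ V, G v = 0 := fun v hv => by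
    have := hu ⟨v, hv⟩
    simp only [G, sub_apply]
    simp only at this
    linarith
  choose! t htU htR htn using hext
  let φ : L →ₗ[ℝ] ℝ :=
    { toFun := fun l => G (t l)
      map_add' := fun a b => by
        have : t (a + b) - t a - t b ∈ V := by
          refine ⟨U.sub_mem (U.sub_mem (htU _ (L.add_mem a.2 b.2)) (htU _ a.2)) (htU _ b.2), ?_⟩
          intro l hl
          rw [map_sub, map_sub, htR _ (L.add_mem a.2 b.2), htR _ a.2, htR _ b.2]
          simp
        have := hG _ this
        simp only [map_sub] at this
        push_cast
        linarith
      map_smul' := fun r a => by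
        have : t (r • a) - r • t a ∈ V := by
          refine ⟨U.sub_mem (htU _ (L.smul_mem r a.2)) (U.smul_mem r (htU _ a.2)), ?_⟩
          intro l hl
          rw [map_sub, map_smul, htR _ (L.smul_mem r a.2), htR _ a.2]
          simp
        have := hG _ this
        simp only [map_sub, map_smul] at this
        simp only [Submodule.coe_smul, RingHom.id_apply]
        linarith }
  let Φ : L →L[ℝ] ℝ := φ.mkContinuous (‖G‖ / β) fun l => by
    have h1 := G.le_opNorm (t l)
    have h2 := htn l l.2
    change ‖G (t l)‖ ≤ _
    have h3 : ‖t l‖ ≤ ‖l‖ / β := by rw [le_div_iff₀ hβ]; rw [Submodule.norm_coe] at h2; linarith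
    calc _ ≤ _ := h1
      _ ≤ ‖G‖ * (‖l‖ / β) := by gcongr
      _ = _ := by ring
  let lam : L := (InnerProductSpace.toDual ℝ L).symm Φ
  have hlam : ∀ l : L, inner ℝ (lam : K) (l : K) = G (t l) := fun l => by
    rw [← Submodule.coe_inner]
    simp only [lam, InnerProductSpace.toDual_symm_apply]
    rfl
  refine ⟨(u, lam), ⟨u.2.1, lam.2, ?_, u.2.2⟩, ?_⟩
  · intro v hv
    let q : L := L.orthogonalProjectionOnto (R v)
    have hq : ∀ l ∈ L, inner ℝ (R v - q) l = 0 := fun l hl => by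
      exact L.starProjection_inner_eq_zero (R v) l hl
    have h1 : v - t q ∈ V := ⟨U.sub_mem hv (htU _ q.2), fun l hl => by
      rw [map_sub, htR _ q.2]; exact hq l hl⟩
    have h2 := hG _ h1
    have h3 := hq lam lam.2
    rw [real_inner_comm, inner_sub_right, hlam] at h3
    rw [map_sub] at h2
    have h4 : G v = F v - A u v := rfl
    simp only
    linarith
  · rintro ⟨u', l'⟩ ⟨h1, h2, h3, h4⟩
    simp only at h1 h2 h3 h4
    have key : ∀ v ∈ U, A u v + inner ℝ (lam : K) (R v) = F v := by
      intro v hv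
      let q : L := L.orthogonalProjectionOnto (R v)
      have hq : ∀ l ∈ L, inner ℝ (R v - q) l = 0 := fun l hl => by
        exact L.starProjection_inner_eq_zero (R v) l hl
      have h1 : v - t q ∈ V := ⟨U.sub_mem hv (htU _ q.2), fun l hl => by
        rw [map_sub, htR _ q.2]; exact hq l hl⟩
      have h2 := hG _ h1
      have h3 := hq lam lam.2
      rw [real_inner_comm, inner_sub_right, hlam] at h3
      rw [map_sub] at h2
      have h4 : G v = F v - A u v := rfl
      linarith
    have hw : u' - u ∈ V := V.sub_mem ⟨h1, h4⟩ u.2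
    have hd : l' - lam ∈ L := L.sub_mem h2 lam.2
    have hdiff : ∀ v ∈ U, A (u' - u) v + inner ℝ (l' - lam) (R v) = 0 := fun v hv => by
      have e1 := h3 v hv
      have e2 := key v hv
      rw [map_sub, sub_apply, inner_sub_left]
      linarith
    have e0 : u' - (u : H) = 0 := by
      have e1 := hdiff _ hw.1
      rw [real_inner_comm, hw.2 _ hd, add_zero] at e1
      have e2 := hcoer _ hw.1 hw.2
      rw [e1] at e2
      have : ‖u' - (u : H)‖ ^ 2 = 0 := by
        have := sq_nonneg ‖u' - (u : H)‖
        nlinarith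
      simpa using this
    have e3 : l' - (lam : K) = 0 := by
      have e1 := hdiff _ (htU _ hd)
      rw [e0, htR _ hd] at e1
      simpa using e1
    rw [sub_eq_zero] at e0 e3
    rw [e0, e3]

theorem restr_aux {α : Type*} [MeasurableSpace α] {μ ν : Measure α} (h : ν ≤ μ) :
    ∃ R : Lp ℝ 2 μ →L[ℝ] Lp ℝ 2 ν, ∀ u, R u =ᵐ[ν] u := by
  have hm : ∀ u : Lp ℝ 2 μ, MemLp u 2 ν := fun u => (Lp.memLp u).mono_measure h
  have hac : ν ≪ μ := Measure.absolutelyContinuous_of_le h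
  let R0 : Lp ℝ 2 μ →ₗ[ℝ] Lp ℝ 2 ν :=
    { toFun := fun u => (hm u).toLp u
      map_add' := fun a b => by
        rw [← MemLp.toLp_add, MemLp.toLp_eq_toLp_iff]
        exact hac.ae_le (Lp.coeFn_add a b)
      map_smul' := fun r a => by
        rw [RingHom.id_apply, ← MemLp.toLp_const_smul, MemLp.toLp_eq_toLp_iff]
        exact hac.ae_le (Lp.coeFn_smul r a) }
  refine ⟨R0.mkContinuous 1 fun u => ?_, fun u => (hm u).coeFn_toLp⟩
  change ‖(hm u).toLp u‖ ≤ _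
  rw [Lp.norm_toLp, one_mul, Lp.norm_def]
  exact ENNReal.toReal_mono (Lp.eLpNorm_ne_top u) (eLpNorm_mono_measure _ h)

theorem form_aux {α : Type*} [MeasurableSpace α] {μ : Measure α} [IsFiniteMeasure μ]
    (γ : α → α → ℝ) (hγ : Measurable fun p : α × α => γ p.1 p.2) (h0 : ∀ x y, 0 ≤ γ x y)
    (hM : ∃ M, ∀ x y, γ x y ≤ M) :
    ∃ A : Lp ℝ 2 μ →L[ℝ] Lp ℝ 2 μ →L[ℝ] ℝ, ∀ u v,
      A u v = ∫ x, ∫ y, γ x y * (u x - u y) * (v x - v y) ∂μ ∂μ := by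
  obtain ⟨M, hM⟩ := hM
  let e : (α → ℝ) → α × α → ℝ := fun u p => √(γ p.1 p.2) * (u p.1 - u p.2)
  have hs : Measurable fun p : α × α => √(γ p.1 p.2) := hγ.sqrt
  have hd : ∀ u : Lp ℝ 2 μ, MemLp (fun p : α × α => u p.1 - u p.2) 2 (μ.prod μ) := fun u =>
    ((Lp.memLp u).comp_fst μ).sub ((Lp.memLp u).comp_snd μ)
  have hb : ∀ u : α → ℝ, ∀ p, ‖e u p‖ ≤ √M * ‖u p.1 - u p.2‖ := fun u p => by
    simp only [e, norm_mul]
    gcongr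
    rw [Real.norm_of_nonneg (Real.sqrt_nonneg _)]
    exact Real.sqrt_le_sqrt (hM _ _)
  have hm : ∀ u : Lp ℝ 2 μ, MemLp (e u) 2 (μ.prod μ) := fun u =>
    MemLp.of_le_mul (hd u) (hs.aestronglyMeasurable.mul (hd u).1) (Filter.Eventually.of_forall (hb u))
  have q1 : Measure.QuasiMeasurePreserving Prod.fst (μ.prod μ) μ :=
    Measure.quasiMeasurePreserving_fst
  have q2 : Measure.QuasiMeasurePreserving Prod.snd (μ.prod μ) μ :=
    Measure.quasiMeasurePreserving_snd
  let E0 : Lp ℝ 2 μ →ₗ[ℝ] Lp ℝ 2 (μ.prod μ) :=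
    { toFun := fun u => (hm u).toLp (e u)
      map_add' := fun a b => by
        rw [← MemLp.toLp_add, MemLp.toLp_eq_toLp_iff]
        filter_upwards [q1.ae (Lp.coeFn_add a b), q2.ae (Lp.coeFn_add a b)] with p h1 h2
        simp only [e, h1, h2, Pi.add_apply]; ring
      map_smul' := fun r a => by
        rw [RingHom.id_apply, ← MemLp.toLp_const_smul, MemLp.toLp_eq_toLp_iff]
        filter_upwards [q1.ae (Lp.coeFn_smul r a), q2.ae (Lp.coeFn_smul r a)] with p h1 h2
        simp only [e, h1, h2, Pi.smul_apply, smul_eq_mul]; ring }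
  let C : ENNReal := (μ Set.univ) ^ (1 / (2 : ENNReal)).toReal
  have hC : C ≠ ⊤ := ENNReal.rpow_ne_top_of_nonneg (by simp) (measure_ne_top _ _)
  have n1 : ∀ u : Lp ℝ 2 μ, eLpNorm (fun p : α × α => u p.1) 2 (μ.prod μ) = C * eLpNorm u 2 μ := by
    intro u
    have h := eLpNorm_map_measure (μ := μ.prod μ) (f := Prod.fst) (g := u) (p := 2)
      (by rw [Measure.map_fst_prod]; exact (Lp.aestronglyMeasurable u).smul_measure _)
      measurable_fst.aemeasurable
    change eLpNorm (u ∘ Prod.fst) 2 _ = _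
    rw [← h, Measure.map_fst_prod, eLpNorm_smul_measure_of_ne_top (by simp)]
    simp [C]
  have n2 : ∀ u : Lp ℝ 2 μ, eLpNorm (fun p : α × α => u p.2) 2 (μ.prod μ) = C * eLpNorm u 2 μ := by
    intro u
    have h := eLpNorm_map_measure (μ := μ.prod μ) (f := Prod.snd) (g := u) (p := 2)
      (by rw [Measure.map_snd_prod]; exact (Lp.aestronglyMeasurable u).smul_measure _)
      measurable_snd.aemeasurable
    change eLpNorm (u ∘ Prod.snd) 2 _ = _
    rw [← h, Measure.map_snd_prod, eLpNorm_smul_measure_of_ne_top (by simp)]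
    simp [C]
  let E : Lp ℝ 2 μ →L[ℝ] Lp ℝ 2 (μ.prod μ) := E0.mkContinuous (√M * (2 * C.toReal)) fun u => by
    change ‖(hm u).toLp (e u)‖ ≤ _
    rw [Lp.norm_toLp, Lp.norm_def]
    have b1 := eLpNorm_le_mul_eLpNorm_of_ae_le_mul (μ := μ.prod μ)
      (Filter.Eventually.of_forall (hb u)) 2
    have b2 := eLpNorm_sub_le (μ := μ.prod μ) (p := 2) ((Lp.memLp u).comp_fst μ).1
      ((Lp.memLp u).comp_snd μ).1 (by norm_num)
    have b3 : eLpNorm (e u) 2 (μ.prod μ) ≤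
        ENNReal.ofReal (√M) * (C * eLpNorm u 2 μ + C * eLpNorm u 2 μ) := by
      refine b1.trans ?_
      gcongr
      refine b2.trans (le_of_eq ?_)
      rw [n1, n2]
    have ht : C * eLpNorm u 2 μ ≠ ⊤ := ENNReal.mul_ne_top hC (Lp.eLpNorm_ne_top u)
    refine (ENNReal.toReal_mono (ENNReal.mul_ne_top (by simp) (by simp [ht])) b3).trans
      (le_of_eq ?_)
    rw [ENNReal.toReal_mul, ENNReal.toReal_add ht ht, ENNReal.toReal_mul,
      ENNReal.toReal_ofReal (Real.sqrt_nonneg _)]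
    ring
  refine ⟨(innerSL ℝ).bilinearComp E E, fun u v => ?_⟩
  have hE : ∀ u, E u =ᵐ[μ.prod μ] e u := fun u => (hm u).coeFn_toLp
  have hi := (hm u).integrable_mul (hm v)
  have hpt : ∀ p : α × α, (e u * e v) p = γ p.1 p.2 * (u p.1 - u p.2) * (v p.1 - v p.2) := by
    intro p
    simp only [e, Pi.mul_apply]
    nth_rewrite 3 [← Real.mul_self_sqrt (h0 p.1 p.2)]
    ring
  have : (innerSL ℝ).bilinearComp E E u v = ∫ p, (e u * e v) p ∂(μ.prod μ) := by
    rw [ContinuousLinearMap.bilinearComp_apply, innerSL_apply_apply, L2.inner_def]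
    refine integral_congr_ae ?_
    filter_upwards [hE u, hE v] with p h1 h2
    rw [h1, h2]
    simp [mul_comm]
  rw [this, integral_prod _ hi]
  simp only [hpt]

theorem stmt9 {n : ℕ} (Ω ΩI : Set (EuclideanSpace ℝ (Fin n)))
    (hΩmeas : MeasurableSet Ω) (hΩImeas : MeasurableSet ΩI)
    (hdisj : Disjoint Ω ΩI)
    (hΩbdd : Bornology.IsBounded Ω) (hΩIbdd : Bornology.IsBounded ΩI)
    (hΩpos : 0 < volume Ω) (hΩIpos : 0 < volume ΩI)
    (γ : EuclideanSpace ℝ (Fin n) → EuclideanSpace ℝ (Fin n) → ℝ)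
    (hγmeas : Measurable fun p : EuclideanSpace ℝ (Fin n) × EuclideanSpace ℝ (Fin n) => γ p.1 p.2)
    (hγnonneg : ∀ x y, 0 ≤ γ x y)
    (hγbdd : ∃ M, ∀ x y, γ x y ≤ M)
    (U : Submodule ℝ (Lp ℝ 2 (volume.restrict (Ω ∪ ΩI))))
    (hUclosed : IsClosed (U : Set (Lp ℝ 2 (volume.restrict (Ω ∪ ΩI)))))
    (Λ : Submodule ℝ (Lp ℝ 2 (volume.restrict ΩI)))
    (hΛclosed : IsClosed (Λ : Set (Lp ℝ 2 (volume.restrict ΩI))))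
    -- `Uc` is the subspace of elements of `U` orthogonal to `Λ` on `Ω_I`
    (Uc : Set (Lp ℝ 2 (volume.restrict (Ω ∪ ΩI))))
    (hUc : Uc = {u : Lp ℝ 2 (volume.restrict (Ω ∪ ΩI)) |
      u ∈ U ∧ ∀ l ∈ Λ, (∫ x in ΩI, u x * l x) = 0})
    -- (i) coercivity of `a` on `Uc`
    (c : ℝ) (hc : 0 < c)
    (hcoer : ∀ z ∈ Uc, aform (Ω ∪ ΩI) γ z z ≥ c * ‖z‖ ^ 2)
    -- (ii) every λ ∈ Λ admits an extension λ̃ ∈ U with λ̃|_{Ω_I} = λ and β‖λ̃‖ ≤ ‖λ‖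
    (β : ℝ) (hβ : 0 < β)
    (hext : ∀ l ∈ Λ, ∃ lt ∈ U,
      (∀ᵐ x ∂(volume.restrict ΩI), lt x = l x) ∧ β * ‖lt‖ ≤ ‖l‖)
    (f : EuclideanSpace ℝ (Fin n) → ℝ)
    (hf : MemLp f 2 (volume.restrict Ω)) :
    ∃! p : Lp ℝ 2 (volume.restrict (Ω ∪ ΩI)) × Lp ℝ 2 (volume.restrict ΩI),
      p.1 ∈ U ∧ p.2 ∈ Λ ∧
      (∀ v ∈ U, aform (Ω ∪ ΩI) γ p.1 v + (∫ x in ΩI, p.2 x * v x) =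
        ∫ x in Ω, v x * f x) ∧
      (∀ ν ∈ Λ, (∫ x in ΩI, p.1 x * ν x) = 0) := by
  have hle1 : volume.restrict ΩI ≤ volume.restrict (Ω ∪ ΩI) :=
    Measure.restrict_mono Set.subset_union_right le_rfl
  have hle2 : volume.restrict Ω ≤ volume.restrict (Ω ∪ ΩI) :=
    Measure.restrict_mono Set.subset_union_left le_rfl
  obtain ⟨R, hR⟩ := restr_aux hle1
  obtain ⟨S, hS⟩ := restr_aux hle2
  have : IsFiniteMeasure (volume.restrict (Ω ∪ ΩI)) :=
    isFiniteMeasure_restrict.2 (hΩbdd.union hΩIbdd).measure_lt_top.ne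
  obtain ⟨A, hA⟩ := form_aux (μ := volume.restrict (Ω ∪ ΩI)) γ hγmeas hγnonneg hγbdd
  have hI : ∀ (v : Lp ℝ 2 (volume.restrict (Ω ∪ ΩI))) (l : Lp ℝ 2 (volume.restrict ΩI)),
      inner ℝ (R v) l = ∫ x in ΩI, v x * l x := fun v l => by
    rw [L2.inner_def]
    refine integral_congr_ae ?_
    filter_upwards [hR v] with x hx
    rw [hx]; simp [mul_comm]
  have hI2 : ∀ (v : Lp ℝ 2 (volume.restrict (Ω ∪ ΩI))) (l : Lp ℝ 2 (volume.restrict ΩI)),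
      inner ℝ l (R v) = ∫ x in ΩI, l x * v x := fun v l => by
    rw [real_inner_comm, hI]
    simp only [mul_comm]
  have hF : ∀ v : Lp ℝ 2 (volume.restrict (Ω ∪ ΩI)),
      ((innerSL ℝ (hf.toLp f)).comp S) v = ∫ x in Ω, v x * f x := fun v => by
    rw [ContinuousLinearMap.comp_apply, innerSL_apply_apply, L2.inner_def]
    refine integral_congr_ae ?_
    filter_upwards [hS v, hf.coeFn_toLp] with x hx hx2
    rw [hx, hx2]; simp
  have main := saddle_aux U hUclosed Λ hΛclosed R A ((innerSL ℝ (hf.toLp f)).comp S) c hc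
    (fun z hz hz2 => by
      rw [hA]
      refine hcoer z ?_
      rw [hUc]
      exact ⟨hz, fun l hl => by rw [← hI]; exact hz2 l hl⟩) β hβ
    (fun l hl => by
      obtain ⟨t, ht, h1, h2⟩ := hext l hl
      exact ⟨t, ht, Lp.ext ((hR t).trans h1), h2⟩)
  simp only [hA, hI, hI2, hF] at main
  exact main
end

section
/- Suppose there is a constant C₀ > 0 such that a(w,w) ≥ C₀·‖w‖²_{L²(Ω̄)} for every w ∈ L²(Ω̄) with ∫_{Ω̄} w(x) dx = 0 (a nonlocal Poincaré inequality). Then for every f ∈ L²(Ω) there exist unique u ∈ L²(Ω̄) and λ ∈ L²(Ω_I) such that: a(u,v) + ∫_{Ω_I} λ(x)·v(x) dx = ∫_Ω v(x)·f(x) dx for all v ∈ L²(Ω̄); and ∫_{Ω_I} u(x)·ν(x) dx = 0 for all ν ∈ L²(Ω_I). Moreover, u = 0 almost everywhere on Ω_I. -/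
open MeasureTheory

section Abstract

variable {H J : Type*} [NormedAddCommGroup H] [InnerProductSpace ℝ H] [CompleteSpace H]
  [NormedAddCommGroup J] [InnerProductSpace ℝ J]

lemma coerc_aux (B : H →L[ℝ] H →L[ℝ] ℝ) (one e : H) (hl : ∀ v, B one v = 0)
    (hr : ∀ v, B v one = 0) (C₀ : ℝ) (hC₀ : 0 < C₀)
    (hP : ∀ w, inner ℝ one w = 0 → C₀ * ‖w‖ ^ 2 ≤ B w w)
    (he : inner ℝ e one ≠ 0) :
    ∃ C, 0 < C ∧ ∀ u, inner ℝ e u = 0 → C * ‖u‖ * ‖u‖ ≤ B u u := by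
  set s : ℝ := |inner ℝ e one| with hs
  have hs0 : 0 < s := abs_pos.mpr he
  have hone : one ≠ 0 := by
    rintro rfl
    simp at he
  have hone2 : inner ℝ one one ≠ 0 := by simpa using hone
  set Rr : ℝ := 1 + ‖e‖ * ‖one‖ / s with hR
  have hR0 : 0 < Rr := by positivity
  refine ⟨C₀ / Rr ^ 2, by positivity, fun u hu => ?_⟩
  set m : ℝ := inner ℝ one u / inner ℝ one one with hm
  set w := u - m • one with hw
  have h1 : inner ℝ one w = 0 := by
    rw [hw, inner_sub_right, inner_smul_right, hm]
    field_simp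
    ring
  have h2 : B w w = B u u := by
    simp [hw, hl, hr]
  have h3 : inner ℝ e w = - (m * inner ℝ e one) := by
    rw [hw, inner_sub_right, inner_smul_right, hu]; ring
  have h4 : |m| * s ≤ ‖e‖ * ‖w‖ := by
    have := abs_real_inner_le_norm e w
    rwa [h3, abs_neg, abs_mul] at this
  have h5 : ‖u‖ ≤ Rr * ‖w‖ := by
    have : u = w + m • one := by simp [hw]
    calc ‖u‖ = ‖w + m • one‖ := by rw [← this]
      _ ≤ ‖w‖ + |m| * ‖one‖ := by
        refine (norm_add_le _ _).trans ?_
        rw [norm_smul, Real.norm_eq_abs]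
      _ ≤ ‖w‖ + (‖e‖ * ‖w‖ / s) * ‖one‖ := by
        gcongr
        rwa [le_div_iff₀ hs0]
      _ = Rr * ‖w‖ := by rw [hR]; ring
  have h6 := hP w h1
  rw [h2] at h6
  refine le_trans ?_ h6
  have h7 : ‖u‖ * ‖u‖ ≤ (Rr * ‖w‖) * (Rr * ‖w‖) := by gcongr
  calc C₀ / Rr ^ 2 * ‖u‖ * ‖u‖ = C₀ / Rr ^ 2 * (‖u‖ * ‖u‖) := by ring
    _ ≤ C₀ / Rr ^ 2 * ((Rr * ‖w‖) * (Rr * ‖w‖)) := by gcongr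
    _ = C₀ * ‖w‖ ^ 2 := by field_simp

lemma saddle_aux_s10 (B : H →L[ℝ] H →L[ℝ] ℝ) (R : H →ₗ[ℝ] J) (S : J → H)
    (hRS : ∀ j, R (S j) = j) (hadj : ∀ j h, inner ℝ (S j) h = inner ℝ j (R h))
    (C : ℝ) (hC : 0 < C) (hco : ∀ u, R u = 0 → C * ‖u‖ * ‖u‖ ≤ B u u) (F : H) :
    ∃! p : H × J, (∀ v, B p.1 v + inner ℝ p.2 (R v) = inner ℝ F v) ∧ R p.1 = 0 := by
  set V : Submodule ℝ H := (Submodule.span ℝ (Set.range S))ᗮ with hV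
  have memV : ∀ u, u ∈ V ↔ R u = 0 := by
    intro u
    rw [hV, Submodule.mem_orthogonal]
    constructor
    · intro h
      have := h (S (R u)) (Submodule.subset_span ⟨_, rfl⟩)
      rw [hadj] at this
      simpa using this
    · intro h x hx
      induction hx using Submodule.span_induction with
      | mem x hx =>
        obtain ⟨j, rfl⟩ := hx
        rw [hadj, h, inner_zero_right]
      | zero => simp
      | add x y _ _ hx hy => rw [inner_add_left, hx, hy, add_zero]
      | smul a x _ hx => rw [inner_smul_left, hx, mul_zero]
  set BV := B.bilinearComp V.subtypeL V.subtypeL with hBV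
  have hcoV : IsCoercive BV := by
    refine ⟨C, hC, fun u => ?_⟩
    exact hco u ((memV u).1 u.2)
  set l : V →L[ℝ] ℝ := (innerSL ℝ F).comp V.subtypeL with hl
  set u := hcoV.continuousLinearEquivOfBilin.symm ((InnerProductSpace.toDual ℝ V).symm l) with hu
  have hu1 : ∀ v : V, B u v = inner ℝ F (v : H) := by
    intro v
    have := hcoV.continuousLinearEquivOfBilin_apply u v
    rw [hu, ContinuousLinearEquiv.apply_symm_apply, InnerProductSpace.toDual_symm_apply] at this
    exact this.symm
  set g : H := (InnerProductSpace.toDual ℝ H).symm (innerSL ℝ F - B u) with hg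
  have hg1 : ∀ v, inner ℝ g v = inner ℝ F v - B u v := by
    intro v
    rw [hg, InnerProductSpace.toDual_symm_apply]
    simp
  have hRu : R u = 0 := (memV _).1 u.2
  refine ⟨(u, R g), ⟨fun v => ?_, hRu⟩, ?_⟩
  · have h1 : R (v - S (R v)) = 0 := by rw [map_sub, hRS, sub_self]
    have h2 := hu1 ⟨_, (memV _).2 h1⟩
    have h3 := hg1 (v - S (R v))
    simp only at h2
    rw [h2, sub_self, inner_sub_right, real_inner_comm (S (R v)) g, hadj, hg1,
      real_inner_comm (R g)] at h3
    simp only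
    linarith
  · rintro ⟨u', l'⟩ ⟨h1, h2⟩
    have h0 : ∀ v, B u v + inner ℝ (R g) (R v) = inner ℝ F v := by
      intro v
      have h1 : R (v - S (R v)) = 0 := by rw [map_sub, hRS, sub_self]
      have h2 := hu1 ⟨_, (memV _).2 h1⟩
      have h3 := hg1 (v - S (R v))
      simp only at h2
      rw [h2, sub_self, inner_sub_right, real_inner_comm (S (R v)) g, hadj, hg1,
        real_inner_comm (R g)] at h3
      linarith
    simp only at h1 h2
    have hd : R (u' - u) = 0 := by rw [map_sub, h2, hRu, sub_self]
    have h3 := hco _ hd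
    have h4 : B (u' - u) (u' - u) = 0 := by
      have a1 := h1 (u' - u)
      have a2 := h0 (u' - u)
      rw [hd, inner_zero_right] at a1 a2
      have a3 : B (u' - u) (u' - u) = B u' (u' - u) - B u (u' - u) := by
        rw [map_sub B]; rfl
      linarith
    rw [h4] at h3
    have h5 : u' = u := by
      by_contra hne
      have : 0 < ‖u' - u‖ := norm_pos_iff.2 (sub_ne_zero.2 hne)
      have : 0 < C * ‖u' - u‖ * ‖u' - u‖ := by positivity
      linarith
    subst h5
    have h6 : l' - R g = 0 := by
      have a1 := h1 (S (l' - R g))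
      have a2 := h0 (S (l' - R g))
      rw [hRS] at a1 a2
      rw [← inner_self_eq_zero (𝕜 := ℝ), inner_sub_left]
      linarith
    rw [sub_eq_zero.1 h6]

end Abstract

section Form

variable {α : Type*} [MeasurableSpace α] {μ : Measure α} [IsFiniteMeasure μ]

lemma memLp_diff {u : α → ℝ} (hu : MemLp u 2 μ) :
    MemLp (fun z : α × α => u z.1 - u z.2) 2 (μ.prod μ) :=
  (hu.comp_fst μ).sub (hu.comp_snd μ)

lemma integrable_form {c : α × α → ℝ} (hc : Measurable c) {M : ℝ} (h0 : ∀ z, 0 ≤ c z)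
    (hM : ∀ z, c z ≤ M) {u v : α → ℝ} (hu : MemLp u 2 μ) (hv : MemLp v 2 μ) :
    Integrable (fun z : α × α => c z * (u z.1 - u z.2) * (v z.1 - v z.2)) (μ.prod μ) := by
  have h : Integrable (fun z : α × α => (u z.1 - u z.2) * (v z.1 - v z.2)) (μ.prod μ) :=
    (memLp_diff hu).integrable_mul (memLp_diff hv)
  have := h.bdd_mul (c := M) (f := c) hc.aestronglyMeasurable
    (Filter.Eventually.of_forall fun z => by
      rw [Real.norm_eq_abs, abs_of_nonneg (h0 z)]; exact hM z)
  simpa [mul_assoc] using this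

lemma normsq_eq (u : Lp ℝ 2 μ) : ‖u‖ ^ 2 = ∫ x, u x ^ 2 ∂μ := by
  rw [← real_inner_self_eq_norm_sq, L2.inner_def]
  simp [sq]

lemma form_ae (c : α × α → ℝ) (u u' v v' : α → ℝ) (hu : u =ᵐ[μ] u') (hv : v =ᵐ[μ] v') :
    (fun z : α × α => c z * (u z.1 - u z.2) * (v z.1 - v z.2)) =ᵐ[μ.prod μ]
      (fun z : α × α => c z * (u' z.1 - u' z.2) * (v' z.1 - v' z.2)) := by
  have f1 := (Measure.quasiMeasurePreserving_fst (μ := μ) (ν := μ)).ae_eq_comp hu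
  have f2 := (Measure.quasiMeasurePreserving_snd (μ := μ) (ν := μ)).ae_eq_comp hu
  have f3 := (Measure.quasiMeasurePreserving_fst (μ := μ) (ν := μ)).ae_eq_comp hv
  have f4 := (Measure.quasiMeasurePreserving_snd (μ := μ) (ν := μ)).ae_eq_comp hv
  filter_upwards [f1, f2, f3, f4] with z h1 h2 h3 h4
  simp only [Function.comp] at h1 h2 h3 h4
  rw [h1, h2, h3, h4]

lemma exists_form {c : α × α → ℝ} (hc : Measurable c) {M : ℝ} (h0 : ∀ z, 0 ≤ c z)
    (hM : ∀ z, c z ≤ M) :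
    ∃ B : Lp ℝ 2 μ →L[ℝ] Lp ℝ 2 μ →L[ℝ] ℝ,
      (∀ u v, B u v = ∫ x, ∫ y, c (x, y) * (u x - u y) * (v x - v y) ∂μ ∂μ) ∧
      (∀ v, B (Lp.const 2 μ (1 : ℝ)) v = 0) ∧ (∀ v, B v (Lp.const 2 μ (1 : ℝ)) = 0) := by
  have hint : ∀ u v : Lp ℝ 2 μ, Integrable
      (fun z : α × α => c z * (u z.1 - u z.2) * (v z.1 - v z.2)) (μ.prod μ) :=
    fun u v => integrable_form hc h0 hM (Lp.memLp u) (Lp.memLp v)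
  have hsymm : ∀ u v : Lp ℝ 2 μ, ∫ z, c z * (u z.1 - u z.2) * (v z.1 - v z.2) ∂(μ.prod μ)
      = ∫ z, c z * (v z.1 - v z.2) * (u z.1 - u z.2) ∂(μ.prod μ) := by
    intro u v
    congr 1; ext z; ring
  have hadd : ∀ u u' v : Lp ℝ 2 μ,
      ∫ z, c z * ((u + u' : Lp ℝ 2 μ) z.1 - (u + u' : Lp ℝ 2 μ) z.2) * (v z.1 - v z.2) ∂(μ.prod μ)
      = ∫ z, c z * (u z.1 - u z.2) * (v z.1 - v z.2) ∂(μ.prod μ)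
        + ∫ z, c z * (u' z.1 - u' z.2) * (v z.1 - v z.2) ∂(μ.prod μ) := by
    intro u u' v
    rw [← integral_add (hint u v) (hint u' v),
      integral_congr_ae (form_ae c _ _ _ _ (Lp.coeFn_add u u') (Filter.EventuallyEq.refl _ v))]
    congr 1; ext z; simp only [Pi.add_apply]; ring
  have hsmul : ∀ (a : ℝ) (u v : Lp ℝ 2 μ),
      ∫ z, c z * ((a • u : Lp ℝ 2 μ) z.1 - (a • u : Lp ℝ 2 μ) z.2) * (v z.1 - v z.2) ∂(μ.prod μ)
      = a * ∫ z, c z * (u z.1 - u z.2) * (v z.1 - v z.2) ∂(μ.prod μ) := by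
    intro a u v
    rw [← integral_const_mul,
      integral_congr_ae (form_ae c _ _ _ _ (Lp.coeFn_smul a u) (Filter.EventuallyEq.refl _ v))]
    congr 1; ext z; simp only [Pi.smul_apply, smul_eq_mul]; ring
  let B0 : LinearMap.BilinForm ℝ (Lp ℝ 2 μ) := LinearMap.mk₂ ℝ
    (fun u v => ∫ z, c z * (u z.1 - u z.2) * (v z.1 - v z.2) ∂(μ.prod μ))
    hadd (fun a u v => by simpa using hsmul a u v)
    (fun u v v' => by rw [hsymm, hadd, hsymm v, hsymm v'])
    (fun a u v => by rw [hsymm, hsmul, hsymm v, smul_eq_mul])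
  have hB0 : ∀ u v, B0 u v = ∫ z, c z * (u z.1 - u z.2) * (v z.1 - v z.2) ∂(μ.prod μ) :=
    fun u v => rfl
  have hpos : ∀ u, 0 ≤ B0 u u := by
    intro u
    rw [hB0]
    refine integral_nonneg fun z => ?_
    simp only [Pi.zero_apply]
    rw [mul_assoc]
    exact mul_nonneg (h0 z) (mul_self_nonneg _)
  have hM' : ∀ z, c z ≤ |M| := fun z => (hM z).trans (le_abs_self M)
  set K : ℝ := |M| * (4 * μ.real Set.univ) with hK
  have hK0 : 0 ≤ K := by positivity
  have hbd : ∀ u, B0 u u ≤ K * ‖u‖ ^ 2 := by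
    intro u
    have i0 : Integrable (fun x => u x ^ 2) μ := (Lp.memLp u).integrable_sq
    have i1 : Integrable (fun z : α × α => u z.1 ^ 2) (μ.prod μ) := i0.comp_fst μ
    have i2 : Integrable (fun z : α × α => u z.2 ^ 2) (μ.prod μ) := i0.comp_snd μ
    have e1 : ∫ z : α × α, u z.1 ^ 2 ∂(μ.prod μ) = μ.real Set.univ * ∫ x, u x ^ 2 ∂μ := by
      rw [integral_fun_fst (fun x => u x ^ 2), smul_eq_mul]
    have e2 : ∫ z : α × α, u z.2 ^ 2 ∂(μ.prod μ) = μ.real Set.univ * ∫ x, u x ^ 2 ∂μ := by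
      rw [integral_fun_snd (fun x => u x ^ 2), smul_eq_mul]
    have : B0 u u ≤ ∫ z : α × α, |M| * (2 * (u z.1 ^ 2 + u z.2 ^ 2)) ∂(μ.prod μ) := by
      rw [hB0]
      refine integral_mono (hint u u) (((i1.add i2).const_mul 2).const_mul |M|) fun z => ?_
      simp only
      rw [mul_assoc]
      refine mul_le_mul (hM' z) ?_ (mul_self_nonneg _) (abs_nonneg _)
      nlinarith [sq_nonneg (u z.1 + u z.2)]
    refine this.trans (le_of_eq ?_)
    rw [integral_const_mul, integral_const_mul, integral_add i1 i2, e1, e2, normsq_eq, hK]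
    ring
  have hCS : ∀ u v, ‖B0 u v‖ ≤ K * ‖u‖ * ‖v‖ := by
    intro u v
    have h := LinearMap.BilinForm.apply_sq_le_of_symm B0 hpos
      ⟨fun x y => hsymm x y⟩ u v
    rw [Real.norm_eq_abs]
    refine abs_le_of_sq_le_sq ?_ (by positivity)
    calc B0 u v ^ 2 ≤ B0 u u * B0 v v := h
      _ ≤ (K * ‖u‖ ^ 2) * (K * ‖v‖ ^ 2) :=
        mul_le_mul (hbd u) (hbd v) (hpos v) (by positivity)
      _ = (K * ‖u‖ * ‖v‖) ^ 2 := by ring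
  have hone : ∀ v, B0 (Lp.const 2 μ (1 : ℝ)) v = 0 := by
    intro v
    rw [hB0, integral_congr_ae (form_ae c _ _ _ _ (Lp.coeFn_const (p := 2) (μ := μ) (1 : ℝ))
      (Filter.EventuallyEq.refl _ v))]
    simp
  refine ⟨B0.mkContinuous₂ K hCS, fun u v => ?_, fun v => ?_, fun v => ?_⟩
  · rw [LinearMap.mkContinuous₂_apply, hB0, integral_prod _ (hint u v)]
  · rw [LinearMap.mkContinuous₂_apply, hone]
  · rw [LinearMap.mkContinuous₂_apply, hB0, hsymm, ← hB0, hone]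

end Form

theorem stmt10 {n : ℕ} (Ω ΩI : Set (EuclideanSpace ℝ (Fin n)))
    (hΩmeas : MeasurableSet Ω) (hΩImeas : MeasurableSet ΩI)
    (hdisj : Disjoint Ω ΩI)
    (hΩbdd : Bornology.IsBounded Ω) (hΩIbdd : Bornology.IsBounded ΩI)
    (hΩpos : 0 < volume Ω) (hΩIpos : 0 < volume ΩI)
    (γ : EuclideanSpace ℝ (Fin n) → EuclideanSpace ℝ (Fin n) → ℝ)
    (hγmeas : Measurable fun p : EuclideanSpace ℝ (Fin n) × EuclideanSpace ℝ (Fin n) => γ p.1 p.2)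
    (hγnonneg : ∀ x y, 0 ≤ γ x y)
    (hγbdd : ∃ M, ∀ x y, γ x y ≤ M)
    -- the nonlocal Poincaré inequality
    (C₀ : ℝ) (hC₀ : 0 < C₀)
    (hpoincare : ∀ w : Lp ℝ 2 (volume.restrict (Ω ∪ ΩI)),
      (∫ x in Ω ∪ ΩI, w x) = 0 →
      aform (Ω ∪ ΩI) γ w w ≥ C₀ * ‖w‖ ^ 2)
    (f : EuclideanSpace ℝ (Fin n) → ℝ)
    (hf : MemLp f 2 (volume.restrict Ω)) :
    (∃! p : Lp ℝ 2 (volume.restrict (Ω ∪ ΩI)) × Lp ℝ 2 (volume.restrict ΩI),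
      (∀ v : Lp ℝ 2 (volume.restrict (Ω ∪ ΩI)),
        aform (Ω ∪ ΩI) γ p.1 v + (∫ x in ΩI, p.2 x * v x) = ∫ x in Ω, v x * f x) ∧
      (∀ ν : Lp ℝ 2 (volume.restrict ΩI), (∫ x in ΩI, p.1 x * ν x) = 0)) ∧
    -- moreover, any such solution `u` vanishes a.e. on `Ω_I`
    (∀ p : Lp ℝ 2 (volume.restrict (Ω ∪ ΩI)) × Lp ℝ 2 (volume.restrict ΩI),
      ((∀ v : Lp ℝ 2 (volume.restrict (Ω ∪ ΩI)),
        aform (Ω ∪ ΩI) γ p.1 v + (∫ x in ΩI, p.2 x * v x) = ∫ x in Ω, v x * f x) ∧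
      (∀ ν : Lp ℝ 2 (volume.restrict ΩI), (∫ x in ΩI, p.1 x * ν x) = 0)) →
      ∀ᵐ x ∂(volume.restrict ΩI), p.1 x = 0) := by
  obtain ⟨M, hM⟩ := hγbdd
  set D := Ω ∪ ΩI with hD
  have hDlt : volume D < ⊤ := (hΩbdd.union hΩIbdd).measure_lt_top
  have hΩIlt : volume ΩI < ⊤ := hΩIbdd.measure_lt_top
  have : IsFiniteMeasure (volume.restrict D) := ⟨by simpa using hDlt⟩
  have : IsFiniteMeasure (volume.restrict ΩI) := ⟨by simpa using hΩIlt⟩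
  obtain ⟨B, hB, hB1, hB2⟩ := exists_form (μ := volume.restrict D) hγmeas
    (fun z => hγnonneg z.1 z.2) (fun z => hM z.1 z.2)
  have hBa : ∀ u v : Lp ℝ 2 (volume.restrict D), aform D γ u v = B u v := by
    intro u v
    rw [hB]; rfl
  have hIle : volume.restrict ΩI ≤ volume.restrict D :=
    Measure.restrict_mono Set.subset_union_right le_rfl
  have hrI : (volume.restrict D).restrict ΩI = volume.restrict ΩI :=
    Measure.restrict_restrict_of_subset Set.subset_union_right
  have hrO : (volume.restrict D).restrict Ω = volume.restrict Ω :=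
    Measure.restrict_restrict_of_subset Set.subset_union_left
  have hac : (volume.restrict ΩI) ≪ (volume.restrict D) := hIle.absolutelyContinuous
  let R : Lp ℝ 2 (volume.restrict D) →ₗ[ℝ] Lp ℝ 2 (volume.restrict ΩI) :=
    { toFun := fun u => ((Lp.memLp u).mono_measure hIle).toLp u
      map_add' := fun u v => by
        rw [← MemLp.toLp_add]
        exact MemLp.toLp_congr _ _ (hac.ae_le (Lp.coeFn_add u v))
      map_smul' := fun a u => by
        rw [RingHom.id_apply, ← MemLp.toLp_const_smul]
        exact MemLp.toLp_congr _ _ (hac.ae_le (Lp.coeFn_smul a u)) }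
  have hR : ∀ u, R u =ᵐ[volume.restrict ΩI] u := fun u =>
    MemLp.coeFn_toLp ((Lp.memLp u).mono_measure hIle)
  have hSm : ∀ j : Lp ℝ 2 (volume.restrict ΩI),
      MemLp (ΩI.indicator j) 2 (volume.restrict D) := fun j => by
    rw [memLp_indicator_iff_restrict hΩImeas, hrI]
    exact Lp.memLp j
  let S : Lp ℝ 2 (volume.restrict ΩI) → Lp ℝ 2 (volume.restrict D) := fun j => (hSm j).toLp _
  have hS : ∀ j, S j =ᵐ[volume.restrict D] ΩI.indicator j := fun j => (hSm j).coeFn_toLp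
  have hRS : ∀ j, R (S j) = j := by
    intro j
    apply Lp.ext
    filter_upwards [hR (S j), hac.ae_le (hS j), ae_restrict_mem hΩImeas] with x h1 h2 h3
    rw [h1, h2, Set.indicator_of_mem h3]
  have hIR : ∀ (j : Lp ℝ 2 (volume.restrict ΩI)) (h : Lp ℝ 2 (volume.restrict D)),
      ∫ x in ΩI, j x * h x = inner ℝ j (R h) := by
    intro j h
    rw [L2.inner_def]
    refine integral_congr_ae ?_
    filter_upwards [hR h] with x hx
    simp [hx, mul_comm]
  have hadj : ∀ j h, inner ℝ (S j) h = inner ℝ j (R h) := by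
    intro j h
    have e : ∫ x in ΩI, j x * h x = ∫ x in ΩI, j x * h x ∂(volume.restrict D) :=
      congrArg (fun m => ∫ x, j x * h x ∂m) hrI.symm
    rw [← hIR, L2.inner_def, e, ← integral_indicator hΩImeas]
    refine integral_congr_ae ?_
    filter_upwards [hS j] with x hx
    rw [hx]
    by_cases hm : x ∈ ΩI <;> simp [hm, mul_comm]
  have hFm : MemLp (Ω.indicator f) 2 (volume.restrict D) := by
    rw [memLp_indicator_iff_restrict hΩmeas, hrO]
    exact hf
  let F : Lp ℝ 2 (volume.restrict D) := hFm.toLp _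
  have hF : ∀ v : Lp ℝ 2 (volume.restrict D), ∫ x in Ω, v x * f x = inner ℝ F v := by
    intro v
    rw [L2.inner_def, ← hrO, ← integral_indicator hΩmeas]
    refine integral_congr_ae ?_
    filter_upwards [hFm.coeFn_toLp] with x hx
    rw [hx]
    by_cases hm : x ∈ Ω <;> simp [hm]
  have hRz : ∀ u : Lp ℝ 2 (volume.restrict D),
      (∀ ν : Lp ℝ 2 (volume.restrict ΩI), (∫ x in ΩI, u x * ν x) = 0) ↔ R u = 0 := by
    intro u
    have h1 : ∀ ν : Lp ℝ 2 (volume.restrict ΩI), (∫ x in ΩI, u x * ν x) = inner ℝ ν (R u) := by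
      intro ν
      rw [← hIR]
      simp_rw [mul_comm]
    simp_rw [h1]
    constructor
    · intro h
      exact inner_self_eq_zero.1 (h (R u))
    · intro h ν
      rw [h, inner_zero_right]
  set one : Lp ℝ 2 (volume.restrict D) := Lp.const 2 _ (1 : ℝ) with hone
  have hone1 : one =ᵐ[volume.restrict D] fun _ => (1 : ℝ) := Lp.coeFn_const 2 _ (1 : ℝ)
  obtain ⟨C, hC, hco⟩ := coerc_aux B one (S (R one)) hB1 hB2 C₀ hC₀
    (by
      intro w hw
      have := hpoincare w (by
        rw [← hw, L2.inner_def]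
        refine integral_congr_ae ?_
        filter_upwards [hone1] with x hx
        simp [hx])
      rwa [hBa] at this)
    (by
      rw [hadj]
      intro h
      have h0 : R one = 0 := inner_self_eq_zero.1 h
      have h1 := hR one
      rw [h0] at h1
      have h2 : ∀ᵐ x ∂(volume.restrict ΩI), False := by
        filter_upwards [h1, hac.ae_le hone1, Lp.coeFn_zero ℝ 2 (volume.restrict ΩI)]
          with x a b c
        rw [b, c] at a
        simp at a
      have h3 : volume.restrict ΩI = 0 := by
        rw [← ae_eq_bot]
        exact Filter.eventually_false_iff_eq_bot.1 h2
      rw [Measure.restrict_eq_zero] at h3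
      exact hΩIpos.ne' h3)
  have key := saddle_aux_s10 B R S hRS hadj C hC
    (fun u hu => hco u (by rw [hadj, hu, inner_zero_right])) F
  simp_rw [hRz, hBa, hIR, hF]
  refine ⟨key, fun p hp => ?_⟩
  have h1 := hR p.1
  rw [hp.2] at h1
  filter_upwards [h1, Lp.coeFn_zero ℝ 2 (volume.restrict ΩI)] with x a b
  rw [← a, b]; rfl
end

section
/- Suppose γ is symmetric (γ(x,y) = γ(y,x)) and let f ∈ L²(Ω). Let u ∈ L²(Ω̄) vanish almost everywhere on Ω_I and satisfy a(u,v) = ∫_Ω v(x)·f(x) dx for every v ∈ L²(Ω̄) that vanishes almost everywhere on Ω_I. Then u satisfies the Fredholm equation σ(x)·u(x) − ∫_Ω γ(x,y)·u(y) dy = f(x)/2 for almost every x ∈ Ω, where σ(x) = ∫_{Ω̄} γ(x,y) dy. -/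
open MeasureTheory

lemma stmt15_aux {E : Type*} [MeasurableSpace E] (μ : Measure E) [IsFiniteMeasure μ]
    (γ : E → E → ℝ) (hγmeas : Measurable fun p : E × E => γ p.1 p.2)
    (M : ℝ) (hM : ∀ x y, ‖γ x y‖ ≤ M) (hγsymm : ∀ x y, γ x y = γ y x)
    (u : E → ℝ) (hu : Integrable u μ) :
    Integrable (fun x => ∫ y, γ x y * (u x - u y) ∂μ) μ ∧
    (∀ x, ∫ y, γ x y * (u x - u y) ∂μ = (∫ y, γ x y ∂μ) * u x - ∫ y, γ x y * u y ∂μ) ∧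
    ∀ S, MeasurableSet S →
      ∫ x, ∫ y, γ x y * (u x - u y) * (S.indicator 1 x - S.indicator 1 y) ∂μ ∂μ
        = 2 * ∫ x in S, ∫ y, γ x y * (u x - u y) ∂μ ∂μ := by
  have hG : Integrable (fun p : E × E => γ p.1 p.2 * (u p.1 - u p.2)) (μ.prod μ) :=
    ((hu.comp_fst μ).sub (hu.comp_snd μ)).bdd_mul (c := M) hγmeas.aestronglyMeasurable
      (Filter.Eventually.of_forall fun p => hM _ _)
  refine ⟨hG.integral_prod_left, ?_, ?_⟩
  · intro x
    have hm : AEStronglyMeasurable (γ x) μ :=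
      (hγmeas.comp measurable_prodMk_left).aestronglyMeasurable
    have h1 : Integrable (γ x) μ :=
      Integrable.of_bound hm M (Filter.Eventually.of_forall fun y => hM _ _)
    have h2 : Integrable (fun y => γ x y * u y) μ :=
      hu.bdd_mul (c := M) hm (Filter.Eventually.of_forall fun y => hM _ _)
    simp_rw [mul_sub]
    rw [integral_sub (h1.mul_const _) h2, integral_mul_const]
  · intro S hS
    have hv : Measurable (S.indicator (1 : E → ℝ)) := measurable_one.indicator hS
    have hb : ∀ x, ‖S.indicator (1 : E → ℝ) x‖ ≤ 1 := by
      intro x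
      by_cases h : x ∈ S <;> simp [h]
    have hA : Integrable (fun p : E × E =>
        S.indicator (1 : E → ℝ) p.1 * (γ p.1 p.2 * (u p.1 - u p.2))) (μ.prod μ) :=
      hG.bdd_mul (c := 1) (hv.comp measurable_fst).aestronglyMeasurable
        (Filter.Eventually.of_forall fun p => hb _)
    have hB : Integrable (fun p : E × E =>
        S.indicator (1 : E → ℝ) p.2 * (γ p.1 p.2 * (u p.1 - u p.2))) (μ.prod μ) :=
      hG.bdd_mul (c := 1) (hv.comp measurable_snd).aestronglyMeasurable
        (Filter.Eventually.of_forall fun p => hb _)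
    have e0 : ∀ x y, γ x y * (u x - u y) * (S.indicator (1 : E → ℝ) x - S.indicator 1 y)
        = S.indicator (1 : E → ℝ) x * (γ x y * (u x - u y))
          - S.indicator (1 : E → ℝ) y * (γ x y * (u x - u y)) := by intros; ring
    simp_rw [e0]
    refine (integral_integral_sub' hA hB).trans ?_
    have e1 : ∫ x, ∫ y, S.indicator (1 : E → ℝ) y * (γ x y * (u x - u y)) ∂μ ∂μ
        = - ∫ x, ∫ y, S.indicator (1 : E → ℝ) x * (γ x y * (u x - u y)) ∂μ ∂μ := by
      rw [integral_integral_swap hB, ← integral_neg]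
      congr 1; ext x
      rw [← integral_neg]
      congr 1; ext y
      rw [hγsymm y x]; ring
    have e2 : ∫ x, ∫ y, S.indicator (1 : E → ℝ) x * (γ x y * (u x - u y)) ∂μ ∂μ
        = ∫ x in S, ∫ y, γ x y * (u x - u y) ∂μ ∂μ := by
      rw [← integral_indicator hS]
      congr 1; ext x
      rw [integral_const_mul]
      by_cases h : x ∈ S <;> simp [h]
    refine (congrArg₂ (· - ·) e2 (e1.trans (congrArg Neg.neg e2))).trans ?_
    ring

theorem stmt15 {n : ℕ} (Ω ΩI : Set (EuclideanSpace ℝ (Fin n)))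
    (hΩmeas : MeasurableSet Ω) (hΩImeas : MeasurableSet ΩI)
    (hdisj : Disjoint Ω ΩI)
    (hΩbdd : Bornology.IsBounded Ω) (hΩIbdd : Bornology.IsBounded ΩI)
    (hΩpos : 0 < volume Ω) (hΩIpos : 0 < volume ΩI)
    (γ : EuclideanSpace ℝ (Fin n) → EuclideanSpace ℝ (Fin n) → ℝ)
    (hγmeas : Measurable fun p : EuclideanSpace ℝ (Fin n) × EuclideanSpace ℝ (Fin n) => γ p.1 p.2)
    (hγnonneg : ∀ x y, 0 ≤ γ x y)
    (hγbdd : ∃ M, ∀ x y, γ x y ≤ M)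
    (hγsymm : ∀ x y, γ x y = γ y x)
    (f : EuclideanSpace ℝ (Fin n) → ℝ)
    (hf : MemLp f 2 (volume.restrict Ω))
    (u : EuclideanSpace ℝ (Fin n) → ℝ)
    (hu : MemLp u 2 (volume.restrict (Ω ∪ ΩI)))
    (huzero : ∀ᵐ x ∂(volume.restrict ΩI), u x = 0)
    -- the weak formulation: `a(u,v) = ∫_Ω v f` for all `v ∈ L²(Ω̄)` vanishing
    -- a.e. on `Ω_I`
    (hweak : ∀ v : EuclideanSpace ℝ (Fin n) → ℝ,
      MemLp v 2 (volume.restrict (Ω ∪ ΩI)) →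
      (∀ᵐ x ∂(volume.restrict ΩI), v x = 0) →
      aform (Ω ∪ ΩI) γ u v = ∫ x in Ω, v x * f x) :
    -- the Fredholm equation, a.e. on `Ω`, with `σ(x) = ∫_{Ω̄} γ(x,y) dy`
    ∀ᵐ x ∂(volume.restrict Ω),
      (∫ y in Ω ∪ ΩI, γ x y) * u x - (∫ y in Ω, γ x y * u y) = f x / 2 := by
  obtain ⟨M, hM⟩ := hγbdd
  have hdisj' : ∀ x ∈ ΩI, x ∉ Ω := fun x hx hx' => Set.disjoint_left.mp hdisj hx' hx
  haveI : IsFiniteMeasure (volume.restrict Ω) :=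
    isFiniteMeasure_restrict.mpr hΩbdd.measure_lt_top.ne
  haveI : IsFiniteMeasure (volume.restrict (Ω ∪ ΩI)) :=
    isFiniteMeasure_restrict.mpr (hΩbdd.union hΩIbdd).measure_lt_top.ne
  have hui : Integrable u (volume.restrict (Ω ∪ ΩI)) := hu.integrable (by norm_num)
  have hM' : ∀ x y, ‖γ x y‖ ≤ M := fun x y => by
    rw [Real.norm_of_nonneg (hγnonneg x y)]; exact hM x y
  obtain ⟨hgi, hge, hS⟩ := stmt15_aux (volume.restrict (Ω ∪ ΩI)) γ hγmeas M hM' hγsymm u hui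
  have hfi : Integrable f (volume.restrict Ω) := hf.integrable (by norm_num)
  have hgiΩ := hgi.mono_measure (Measure.restrict_mono_set volume
    (Set.subset_union_left (s := Ω) (t := ΩI)))
  have hmain : (fun x => 2 * ∫ y in Ω ∪ ΩI, γ x y * (u x - u y)) =ᵐ[volume.restrict Ω] f := by
    refine Integrable.ae_eq_of_forall_setIntegral_eq _ _ (hgiΩ.const_mul 2) hfi ?_
    intro S hSm _
    have hT : MeasurableSet (S ∩ Ω) := hSm.inter hΩmeas
    have hw := hweak ((S ∩ Ω).indicator 1)
      (MemLp.indicator hT (memLp_const (1 : ℝ)))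
      (by
        filter_upwards [ae_restrict_mem hΩImeas] with x hx
        simp [hdisj' x hx])
    unfold aform at hw
    rw [hS _ hT, Measure.restrict_restrict hT,
      Set.inter_eq_self_of_subset_left
        (Set.inter_subset_right.trans Set.subset_union_left)] at hw
    rw [integral_const_mul, Measure.restrict_restrict hSm, hw]
    have : (fun x => (S ∩ Ω).indicator (1 : EuclideanSpace ℝ (Fin n) → ℝ) x * f x)
        = (S ∩ Ω).indicator f := by
      ext x
      by_cases h : x ∈ S ∩ Ω
      · rw [Set.indicator_of_mem h, Set.indicator_of_mem h]; simp
      · rw [Set.indicator_of_notMem h, Set.indicator_of_notMem h]; simp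
    rw [this, integral_indicator hT, Measure.restrict_restrict hT, Set.inter_assoc,
      Set.inter_self]
  filter_upwards [hmain] with x hx
  have hmx : AEStronglyMeasurable (γ x) (volume.restrict (Ω ∪ ΩI)) :=
    (hγmeas.comp measurable_prodMk_left).aestronglyMeasurable
  have hint : Integrable (fun y => γ x y * u y) (volume.restrict (Ω ∪ ΩI)) :=
    hui.bdd_mul (c := M) hmx (Filter.Eventually.of_forall fun y => hM' _ _)
  have hsplit : ∫ y in Ω ∪ ΩI, γ x y * u y = ∫ y in Ω, γ x y * u y := by
    rw [setIntegral_union hdisj hΩImeas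
      (IntegrableOn.mono_set hint Set.subset_union_left)
      (IntegrableOn.mono_set hint Set.subset_union_right)]
    have : ∫ y in ΩI, γ x y * u y = 0 := by
      apply integral_eq_zero_of_ae
      filter_upwards [huzero] with y hy
      simp [hy]
    rw [this, add_zero]
  simp only [hge x, hsplit] at hx
  linarith
end
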